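/- arXiv:1610.00394 — 2 statements merged into one kernel-verified Lean document; each statement's English description precedes it below -/
import Mathlib

section
/- If problem (Q) is feasible, then its infimum q* is finite and is attained: there exists a feasible pair (η*, η_T*) with ⟨η*,h⟩ + ⟨η_T*,H⟩ = q*. -/
open MeasureTheory Set ProbabilityTheory

noncomputable section

/-- The input constraint set `U = [-1,1]^m`. -/
def Ubox (m : ℕ) : Set (Fin m → ℝ) := Set.Icc (fun _ => (-1 : ℝ)) (fun _ => (1 : ℝ))

/-- The controlled vector field `F(t,x,u) = f(t,x) + g(t,x) u`. -/
def Fvec {n m : ℕ} (f : ℝ × (Fin n → ℝ) → Fin n → ℝ)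
    (g : ℝ × (Fin n → ℝ) → Fin n → Fin m → ℝ)
    (z : ℝ × (Fin n → ℝ) × (Fin m → ℝ)) : Fin n → ℝ :=
  fun k => f (z.1, z.2.1) k + ∑ j, g (z.1, z.2.1) k j * z.2.2 j

/-- `(L_F v)(t,x,u) = ∂v/∂t + Σ_k (∂v/∂x_k)·[F(t,x,u)]_k`. -/
def LFop {n m : ℕ} (f : ℝ × (Fin n → ℝ) → Fin n → ℝ)
    (g : ℝ × (Fin n → ℝ) → Fin n → Fin m → ℝ)
    (v : ℝ × (Fin n → ℝ) → ℝ) (z : ℝ × (Fin n → ℝ) × (Fin m → ℝ)) : ℝ :=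
  fderiv ℝ v (z.1, z.2.1) ((1 : ℝ), (0 : Fin n → ℝ)) +
    ∑ k, fderiv ℝ v (z.1, z.2.1) ((0 : ℝ), Pi.single k (1 : ℝ)) * Fvec f g z k

/-- Liouville's equation for a pair of measures `(η, ηT)` with initial point `x₀`. -/
def SatisfiesLiouville {n m : ℕ} (T : ℝ) (x₀ : Fin n → ℝ)
    (f : ℝ × (Fin n → ℝ) → Fin n → ℝ) (g : ℝ × (Fin n → ℝ) → Fin n → Fin m → ℝ)
    (η : Measure (ℝ × (Fin n → ℝ) × (Fin m → ℝ))) (ηT : Measure (Fin n → ℝ)) : Prop :=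
  ∀ v : ℝ × (Fin n → ℝ) → ℝ, ContDiff ℝ 1 v →
    v (0, x₀) + ∫ z, LFop f g v z ∂η = ∫ y, v (T, y) ∂ηT

/-- An admissible pair: a Borel measurable control `u` with values in `U` and an
absolutely continuous trajectory `x` with `x(0) = x₀`, `x(T) ∈ X_T`, `x(t) ∈ X` on `[0,T]`
and `ẋ = F(t,x,u)` a.e. (encoded in integral form). -/
def IsAdmissiblePair {n m : ℕ} (T : ℝ) (X XT : Set (Fin n → ℝ)) (x₀ : Fin n → ℝ)
    (f : ℝ × (Fin n → ℝ) → Fin n → ℝ) (g : ℝ × (Fin n → ℝ) → Fin n → Fin m → ℝ)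
    (x : ℝ → Fin n → ℝ) (u : ℝ → Fin m → ℝ) : Prop :=
  Measurable u ∧ (∀ t ∈ Set.Icc (0 : ℝ) T, u t ∈ Ubox m) ∧
  x 0 = x₀ ∧ x T ∈ XT ∧ (∀ t ∈ Set.Icc (0 : ℝ) T, x t ∈ X) ∧
  IntegrableOn (fun s => Fvec f g (s, x s, u s)) (Set.Icc (0 : ℝ) T) volume ∧
  ∀ t ∈ Set.Icc (0 : ℝ) T, x t = x₀ + ∫ s in Set.Icc (0 : ℝ) t, Fvec f g (s, x s, u s)

/-- The cost `J(x,u) = ∫₀^T h(t,x(t),u(t)) dt + H(x(T))` of an admissible pair. -/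
def Jcost {n m : ℕ} (T : ℝ) (h : ℝ × (Fin n → ℝ) × (Fin m → ℝ) → ℝ)
    (H : (Fin n → ℝ) → ℝ) (x : ℝ → Fin n → ℝ) (u : ℝ → Fin m → ℝ) : ℝ :=
  (∫ t in Set.Icc (0 : ℝ) T, h (t, x t, u t)) + H (x T)

/-- The set of costs of admissible pairs; its infimum is `J*`. -/
def JVals {n m : ℕ} (T : ℝ) (X XT : Set (Fin n → ℝ)) (x₀ : Fin n → ℝ)
    (f : ℝ × (Fin n → ℝ) → Fin n → ℝ) (g : ℝ × (Fin n → ℝ) → Fin n → Fin m → ℝ)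
    (h : ℝ × (Fin n → ℝ) × (Fin m → ℝ) → ℝ) (H : (Fin n → ℝ) → ℝ) : Set ℝ :=
  {c | ∃ (x : ℝ → Fin n → ℝ) (u : ℝ → Fin m → ℝ),
    IsAdmissiblePair T X XT x₀ f g x u ∧ c = Jcost T h H x u}

/-- Feasibility for problem `(Q)`. -/
def QFeasible {n m : ℕ} (T : ℝ) (X XT : Set (Fin n → ℝ)) (x₀ : Fin n → ℝ)
    (f : ℝ × (Fin n → ℝ) → Fin n → ℝ) (g : ℝ × (Fin n → ℝ) → Fin n → Fin m → ℝ)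
    (η : Measure (ℝ × (Fin n → ℝ) × (Fin m → ℝ))) (ηT : Measure (Fin n → ℝ)) : Prop :=
  IsFiniteMeasure η ∧ IsFiniteMeasure ηT ∧
  η ((Set.Icc (0 : ℝ) T ×ˢ X ×ˢ Ubox m)ᶜ) = 0 ∧ ηT (XTᶜ) = 0 ∧
  SatisfiesLiouville T x₀ f g η ηT

/-- The cost `⟨η,h⟩ + ⟨η_T,H⟩` of a pair of measures. -/
def Qcost {n m : ℕ} (h : ℝ × (Fin n → ℝ) × (Fin m → ℝ) → ℝ) (H : (Fin n → ℝ) → ℝ)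
    (η : Measure (ℝ × (Fin n → ℝ) × (Fin m → ℝ))) (ηT : Measure (Fin n → ℝ)) : ℝ :=
  ∫ z, h z ∂η + ∫ y, H y ∂ηT

/-- The set of costs of feasible points of `(Q)`; its infimum is `q*`. -/
def QVals {n m : ℕ} (T : ℝ) (X XT : Set (Fin n → ℝ)) (x₀ : Fin n → ℝ)
    (f : ℝ × (Fin n → ℝ) → Fin n → ℝ) (g : ℝ × (Fin n → ℝ) → Fin n → Fin m → ℝ)
    (h : ℝ × (Fin n → ℝ) × (Fin m → ℝ) → ℝ) (H : (Fin n → ℝ) → ℝ) : Set ℝ :=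
  {c | ∃ (η : Measure (ℝ × (Fin n → ℝ) × (Fin m → ℝ))) (ηT : Measure (Fin n → ℝ)),
    QFeasible T X XT x₀ f g η ηT ∧ c = Qcost h H η ηT}

/-!
The test functions `v = 1` and `v = t` in Liouville's equation force `η_T` to have mass `1` and `η`
to have mass `T`, so all feasible pairs lie in a product of two sets of measures of bounded mass on
a fixed compact set, which is weakly compact by Prokhorov's theorem. On such a set, integrating a
function that is only continuous on the compact set is still weakly continuous, because Tietze's
theorem extends it to a bounded continuous function without changing the integrals. Hence
Liouville's equation is a closed condition, the cost is continuous, and the set of feasible costs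
is compact.
-/

lemma isCompact_setOfPred_mem_forall_eq {α β ι : Type*} [TopologicalSpace α] [TopologicalSpace β]
    [T2Space β] {s : Set α} (hs : IsCompact s) {φ ψ : ι → α → β}
    (hφ : ∀ i, ContinuousOn (φ i) s) (hψ : ∀ i, ContinuousOn (ψ i) s) :
    IsCompact {a | a ∈ s ∧ ∀ i, φ i a = ψ i a} := by
  have : CompactSpace s := isCompact_iff_compactSpace.mp hs
  have h_closed : IsClosed {a : s | ∀ i, φ i a = ψ i a} := by
    simp only [ofPred_forall]
    exact isClosed_iInter fun i => isClosed_eq (hφ i).domRestrict (hψ i).domRestrict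
  convert h_closed.isCompact.image continuous_subtype_val
  ext a
  simp [and_comm]

lemma exists_boundedContinuousFunction_eqOn {E : Type*} [TopologicalSpace E] [T2Space E]
    [NormalSpace E] {K : Set E} (hK : IsCompact K) {φ : E → ℝ} (hφ : ContinuousOn φ K) :
    ∃ ψ : BoundedContinuousFunction E ℝ, EqOn φ ψ K := by
  have : CompactSpace K := isCompact_iff_compactSpace.mp hK
  obtain ⟨ψ, -, hψ⟩ := BoundedContinuousFunction.exists_norm_eq_domRestrict_eq_of_closed
    (BoundedContinuousFunction.mkOfCompact ⟨K.domRestrict φ, hφ.domRestrict⟩) hK.isClosed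
  exact ⟨ψ, fun z hz => (DFunLike.congr_fun hψ ⟨z, hz⟩).symm⟩

lemma continuousOn_integral_finiteMeasure {E : Type*} [TopologicalSpace E] [T2Space E]
    [NormalSpace E] [MeasurableSpace E] [OpensMeasurableSpace E] {K : Set E} (hK : IsCompact K)
    {φ : E → ℝ} (hφ : ContinuousOn φ K) :
    ContinuousOn (fun μ : FiniteMeasure E => ∫ z, φ z ∂(μ : Measure E)) {μ | μ Kᶜ = 0} := by
  obtain ⟨ψ, hψ⟩ := exists_boundedContinuousFunction_eqOn hK hφ
  refine (FiniteMeasure.continuous_integral_boundedContinuousFunction ψ).continuousOn.congr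
    fun μ hμ => integral_congr_ae ?_
  have h_mem : ∀ᵐ z ∂(μ : Measure E), z ∈ K := (FiniteMeasure.null_iff_toMeasure_null μ Kᶜ).mp hμ
  exact h_mem.mono hψ

section Liouville

variable {n m : ℕ} {T : ℝ} {X XT : Set (Fin n → ℝ)} {x₀ : Fin n → ℝ}
  {f : ℝ × (Fin n → ℝ) → Fin n → ℝ} {g : ℝ × (Fin n → ℝ) → Fin n → Fin m → ℝ}
  {η : Measure (ℝ × (Fin n → ℝ) × (Fin m → ℝ))} {ηT : Measure (Fin n → ℝ)}

lemma continuousOn_fvec {I : Set ℝ} {U : Set (Fin m → ℝ)} (hf : ContinuousOn f (I ×ˢ X))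
    (hg : ContinuousOn g (I ×ˢ X)) : ContinuousOn (Fvec f g) (I ×ˢ X ×ˢ U) := by
  have h_proj : ContinuousOn (fun z : ℝ × (Fin n → ℝ) × (Fin m → ℝ) => (z.1, z.2.1))
      (I ×ˢ X ×ˢ U) := by fun_prop
  have h_maps : MapsTo (fun z : ℝ × (Fin n → ℝ) × (Fin m → ℝ) => (z.1, z.2.1))
      (I ×ˢ X ×ˢ U) (I ×ˢ X) := fun z hz => ⟨hz.1, hz.2.1⟩
  have hf' := continuousOn_pi.mp (hf.comp h_proj h_maps)
  have hg' := fun k => continuousOn_pi.mp (continuousOn_pi.mp (hg.comp h_proj h_maps) k)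
  exact continuousOn_pi.mpr fun k => (hf' k).add <| continuousOn_finsetSum _ fun j _ =>
    (hg' k j).mul (by fun_prop)

lemma continuousOn_lFop {I : Set ℝ} {U : Set (Fin m → ℝ)} (hf : ContinuousOn f (I ×ˢ X))
    (hg : ContinuousOn g (I ×ˢ X)) {v : ℝ × (Fin n → ℝ) → ℝ} (hv : ContDiff ℝ 1 v) :
    ContinuousOn (LFop f g v) (I ×ˢ X ×ˢ U) := by
  have h_fderiv (w : ℝ × (Fin n → ℝ)) :
      Continuous fun z : ℝ × (Fin n → ℝ) × (Fin m → ℝ) => fderiv ℝ v (z.1, z.2.1) w :=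
    ((hv.continuous_fderiv one_ne_zero).comp (by fun_prop)).clm_apply continuous_const
  exact (h_fderiv _).continuousOn.add <| continuousOn_finsetSum _ fun k _ =>
    (h_fderiv _).continuousOn.mul (continuousOn_pi.mp (continuousOn_fvec hf hg) k)

lemma lFop_const (c : ℝ) : LFop f g (fun _ => c) = 0 := by
  ext z
  simp [LFop]

lemma lFop_fst : LFop f g Prod.fst = 1 := by
  ext z
  simp [LFop, fderiv_fst]

lemma SatisfiesLiouville.terminal_real_univ (hL : SatisfiesLiouville T x₀ f g η ηT) :
    ηT.real univ = 1 := by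
  simpa [lFop_const] using (hL (fun _ => 1) contDiff_const).symm

lemma SatisfiesLiouville.real_univ (hL : SatisfiesLiouville T x₀ f g η ηT) :
    η.real univ = T := by
  simpa [lFop_fst, hL.terminal_real_univ] using hL Prod.fst contDiff_fst

variable (T X XT x₀ f g) in
/-- The feasible set of problem `(Q)`, as a set of pairs of `FiniteMeasure`s in order to carry the
topology of weak convergence. -/
def feasiblePairs :
    Set (FiniteMeasure (ℝ × (Fin n → ℝ) × (Fin m → ℝ)) × FiniteMeasure (Fin n → ℝ)) :=
  {p | QFeasible T X XT x₀ f g p.1 p.2}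

lemma mem_feasiblePairs_iff {p : FiniteMeasure (ℝ × (Fin n → ℝ) × (Fin m → ℝ)) ×
      FiniteMeasure (Fin n → ℝ)} :
    p ∈ feasiblePairs T X XT x₀ f g ↔
      p.1 (Icc 0 T ×ˢ X ×ˢ Ubox m)ᶜ = 0 ∧ p.2 XTᶜ = 0 ∧
        SatisfiesLiouville T x₀ f g p.1 p.2 := by
  simp only [feasiblePairs, QFeasible, mem_ofPred_eq, FiniteMeasure.null_iff_toMeasure_null]
  exact ⟨fun hp => hp.2.2, fun hp => ⟨inferInstance, inferInstance, hp⟩⟩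

lemma feasiblePairs_eq_setOfPred_mass_le :
    feasiblePairs T X XT x₀ f g =
      {p | p ∈ {μ : FiniteMeasure (ℝ × (Fin n → ℝ) × (Fin m → ℝ)) |
            μ.mass ≤ T.toNNReal ∧ μ (Icc 0 T ×ˢ X ×ˢ Ubox m)ᶜ = 0} ×ˢ
          {ν : FiniteMeasure (Fin n → ℝ) | ν.mass ≤ 1 ∧ ν XTᶜ = 0} ∧
        ∀ v : {v : ℝ × (Fin n → ℝ) → ℝ // ContDiff ℝ 1 v},
          v.1 (0, x₀) + ∫ z, LFop f g v.1 z ∂(p.1 : Measure _) =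
            ∫ y, v.1 (T, y) ∂(p.2 : Measure _)} := by
  ext p
  rw [mem_feasiblePairs_iff]
  constructor
  · rintro ⟨hη, hηT, hL⟩
    have h_mass : p.1.mass = T.toNNReal := by
      rw [← hL.real_univ]
      exact Real.toNNReal_coe.symm
    have h_mass_terminal : p.2.mass = 1 := NNReal.coe_injective hL.terminal_real_univ
    exact ⟨⟨⟨h_mass.le, hη⟩, h_mass_terminal.le, hηT⟩, fun v => hL v.1 v.2⟩
  · rintro ⟨⟨⟨-, hη⟩, -, hηT⟩, hL⟩
    exact ⟨hη, hηT, fun v hv => hL ⟨v, hv⟩⟩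

lemma isCompact_feasiblePairs (hX : IsCompact X) (hXT : IsCompact XT)
    (hf : ContinuousOn f (Icc 0 T ×ˢ X)) (hg : ContinuousOn g (Icc 0 T ×ˢ X)) :
    IsCompact (feasiblePairs T X XT x₀ f g) := by
  have hK : IsCompact (Icc 0 T ×ˢ X ×ˢ Ubox m) := isCompact_Icc.prod (hX.prod isCompact_Icc)
  rw [feasiblePairs_eq_setOfPred_mass_le]
  refine isCompact_setOfPred_mem_forall_eq
    ((isCompact_setOfPred_finiteMeasure_le_of_isCompact _ hK).prod
      (isCompact_setOfPred_finiteMeasure_le_of_isCompact _ hXT)) (fun v => ?_) (fun v => ?_)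
  · exact continuousOn_const.add <| (continuousOn_integral_finiteMeasure hK
      (continuousOn_lFop hf hg v.2)).comp continuousOn_fst fun p hp => hp.1.2
  · have hv : Continuous fun y => v.1 (T, y) := v.2.continuous.comp (by fun_prop)
    exact (continuousOn_integral_finiteMeasure hXT hv.continuousOn).comp continuousOn_snd
      fun p hp => hp.2.2

variable {h : ℝ × (Fin n → ℝ) × (Fin m → ℝ) → ℝ} {H : (Fin n → ℝ) → ℝ}

lemma continuousOn_qcost_feasiblePairs (hX : IsCompact X) (hXT : IsCompact XT)
    (hh : ContinuousOn h (Icc 0 T ×ˢ X ×ˢ Ubox m)) (hH : ContinuousOn H XT) :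
    ContinuousOn (fun p : FiniteMeasure (ℝ × (Fin n → ℝ) × (Fin m → ℝ)) ×
      FiniteMeasure (Fin n → ℝ) => Qcost h H p.1 p.2) (feasiblePairs T X XT x₀ f g) := by
  have hK : IsCompact (Icc 0 T ×ˢ X ×ˢ Ubox m) := isCompact_Icc.prod (hX.prod isCompact_Icc)
  exact ((continuousOn_integral_finiteMeasure hK hh).comp continuousOn_fst
      fun p hp => (mem_feasiblePairs_iff.mp hp).1).add
    ((continuousOn_integral_finiteMeasure hXT hH).comp continuousOn_snd
      fun p hp => (mem_feasiblePairs_iff.mp hp).2.1)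

lemma image_qcost_feasiblePairs :
    (fun p : FiniteMeasure (ℝ × (Fin n → ℝ) × (Fin m → ℝ)) × FiniteMeasure (Fin n → ℝ) =>
      Qcost h H p.1 p.2) '' feasiblePairs T X XT x₀ f g = QVals T X XT x₀ f g h H := by
  ext c
  constructor
  · rintro ⟨p, hp, rfl⟩
    exact ⟨p.1, p.2, hp, rfl⟩
  · rintro ⟨η, ηT, hfeas, rfl⟩
    exact ⟨(⟨η, hfeas.1⟩, ⟨ηT, hfeas.2.1⟩), hfeas, rfl⟩

lemma isCompact_qVals (hX : IsCompact X) (hXT : IsCompact XT)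
    (hf : ContinuousOn f (Icc 0 T ×ˢ X)) (hg : ContinuousOn g (Icc 0 T ×ˢ X))
    (hh : ContinuousOn h (Icc 0 T ×ˢ X ×ˢ Ubox m)) (hH : ContinuousOn H XT) :
    IsCompact (QVals T X XT x₀ f g h H) := by
  rw [← image_qcost_feasiblePairs]
  exact (isCompact_feasiblePairs hX hXT hf hg).image_of_continuousOn
    (continuousOn_qcost_feasiblePairs hX hXT hh hH)

theorem Q_minimum_attained_general (hX : IsCompact X) (hXT : IsCompact XT)
    (hf : ContinuousOn f (Icc 0 T ×ˢ X)) (hg : ContinuousOn g (Icc 0 T ×ˢ X))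
    (hh : ContinuousOn h (Icc 0 T ×ˢ X ×ˢ Ubox m)) (hH : ContinuousOn H XT)
    (hQfeas : ∃ η ηT, QFeasible T X XT x₀ f g η ηT) :
    ∃ η ηT, QFeasible T X XT x₀ f g η ηT ∧
      IsLeast (QVals T X XT x₀ f g h H) (Qcost h H η ηT) := by
  obtain ⟨η₀, ηT₀, hfeas₀⟩ := hQfeas
  obtain ⟨c, hc⟩ := (isCompact_qVals hX hXT hf hg hh hH).exists_isLeast ⟨_, η₀, ηT₀, hfeas₀, rfl⟩
  obtain ⟨η, ηT, hfeas, rfl⟩ := hc.1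
  exact ⟨η, ηT, hfeas, hc⟩

end Liouville

/-- if problem (Q) is feasible, then its infimum q* is finite and attained:
there is a feasible pair (η*, η_T*) whose cost is a least element of the set of feasible
costs of (Q). -/
theorem Q_minimum_attained
    {n m : ℕ} (hn : 0 < n) (hm : 0 < m) (T : ℝ) (hT : 0 < T)
    (X XT : Set (Fin n → ℝ)) (hX : IsCompact X) (hXT : IsCompact XT) (hXTsub : XT ⊆ X)
    (x₀ : Fin n → ℝ) (hx₀ : x₀ ∈ X)
    (f : ℝ × (Fin n → ℝ) → Fin n → ℝ) (g : ℝ × (Fin n → ℝ) → Fin n → Fin m → ℝ)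
    (hf : ContinuousOn f (Set.Icc (0 : ℝ) T ×ˢ Set.univ))
    (hg : ContinuousOn g (Set.Icc (0 : ℝ) T ×ˢ Set.univ))
    (h : ℝ × (Fin n → ℝ) × (Fin m → ℝ) → ℝ) (H : (Fin n → ℝ) → ℝ)
    (hh : Continuous h) (hH : Continuous H)
    (hQfeas : ∃ (η : Measure (ℝ × (Fin n → ℝ) × (Fin m → ℝ))) (ηT : Measure (Fin n → ℝ)),
      QFeasible T X XT x₀ f g η ηT) :
    ∃ (η : Measure (ℝ × (Fin n → ℝ) × (Fin m → ℝ))) (ηT : Measure (Fin n → ℝ)),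
      QFeasible T X XT x₀ f g η ηT ∧
      IsLeast (QVals T X XT x₀ f g h H) (Qcost h H η ηT) :=
  have h_sub : Icc 0 T ×ˢ X ⊆ Icc 0 T ×ˢ univ := prod_mono_right (subset_univ X)
  Q_minimum_attained_general hX hXT (hf.mono h_sub) (hg.mono h_sub) hh.continuousOn hH.continuousOn
    hQfeas

end
end

section
/- Assume h(t,x,·) is convex on ℝ^m for every (t,x), and that the optimal control problem admits an optimal admissible pair (x*,u*), unique up to equality for Lebesgue-a.e. t. If problem (Q) is feasible, then its minimum q* equals the optimal value of the optimal control problem: q* = J* = J(x*,u*). -/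
open MeasureTheory Set ProbabilityTheory

noncomputable section

/-!
Pushing time forward along an admissible pair yields its occupation measure, so `q* ≤ J*`.

For the converse, let the control be an arbitrary path of triples `(t, x, u)` in
`[0, T] × X × U`, let its velocity be `F(t, x, u)`, and charge a penalty of weight `k` for the
distance of the actual time, state and endpoint from the prescribed ones. The velocity of this
problem no longer depends on the state, so, without any Lipschitz assumption on `f` and `g`, its
value function `V k` is continuous and satisfies dynamic programming. Mollifying `V k` gives `C¹`
subsolutions of the Hamilton–Jacobi–Bellman equation, and Liouville's equation tested against these
shows `V k (0, x₀) ≤ q*`. As `k → ∞`, near-minimizers of the penalized problems follow ever more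
closely the times and states they prescribe, and a subsequence of their curves converges uniformly.
Because `F` is affine and `h` convex in `u`, a weak `L²` limit of their controls drives the limit
curve at a cost of at most `q*`.
-/

section
open Filter Topology Metric
open scoped NNReal Convolution ENNReal

lemma integrable_comp_of_continuousOn {Ω Z F : Type*} [MeasurableSpace Ω] {μ : Measure Ω}
    [IsFiniteMeasure μ] [TopologicalSpace Z] [T2Space Z] [MeasurableSpace Z] [BorelSpace Z]
    [NormedAddCommGroup F] {K : Set Z} (hK : IsCompact K) {G : Z → F} (hG : ContinuousOn G K)
    {P : Ω → Z} (hP : AEMeasurable P μ) (hPK : ∀ᵐ s ∂μ, P s ∈ K) :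
    Integrable (fun s => G (P s)) μ := by
  have hmem : ∀ᵐ z ∂μ.map P, z ∈ K := (ae_map_iff hP hK.measurableSet).2 hPK
  have hint : IntegrableOn G K (μ.map P) := hG.integrableOn_compact' hK hK.measurableSet
  rw [IntegrableOn, Measure.restrict_eq_self_of_ae_mem hmem] at hint
  exact hint.comp_aemeasurable hP

lemma exists_norm_sub_le_add_mul_of_continuousOn {Z F : Type*} [SeminormedAddCommGroup Z]
    [SeminormedAddCommGroup F] {K : Set Z} (hK : IsCompact K) {G : Z → F} (hG : ContinuousOn G K)
    {ε : ℝ} (hε : 0 < ε) :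
    ∃ C, ∀ z ∈ K, ∀ z' ∈ K, ‖G z - G z'‖ ≤ ε + C * ‖z - z'‖ := by
  obtain ⟨δ, hδ, hG_near⟩ :=
    Metric.uniformContinuousOn_iff.1 (hK.uniformContinuousOn_of_continuous hG) ε hε
  obtain ⟨B, hB⟩ := hK.exists_bound_of_continuousOn hG
  refine ⟨2 * B / δ, fun z hz z' hz' => ?_⟩
  have hB_nonneg : 0 ≤ B := (norm_nonneg _).trans (hB z hz)
  rcases lt_or_ge ‖z - z'‖ δ with hlt | hge
  · have hnear := hG_near z hz z' hz' (by rwa [dist_eq_norm])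
    rw [dist_eq_norm] at hnear
    exact hnear.le.trans (le_add_of_nonneg_right (by positivity))
  · calc ‖G z - G z'‖ ≤ B + B := norm_sub_le_of_le (hB z hz) (hB z' hz')
      _ = 2 * B / δ * δ := by field_simp; ring
      _ ≤ 2 * B / δ * ‖z - z'‖ := by gcongr
      _ ≤ ε + 2 * B / δ * ‖z - z'‖ := le_add_of_nonneg_left hε.le

lemma tendsto_integral_norm_comp_sub_comp {Ω Z F ι : Type*} [MeasurableSpace Ω] {μ : Measure Ω}
    [IsFiniteMeasure μ] [NormedAddCommGroup Z] [MeasurableSpace Z] [BorelSpace Z]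
    [NormedAddCommGroup F] {K : Set Z} (hK : IsCompact K) {G : Z → F} (hG : ContinuousOn G K)
    {l : Filter ι} {P Q : ι → Ω → Z} (hP : ∀ i, AEMeasurable (P i) μ)
    (hQ : ∀ i, AEMeasurable (Q i) μ) (hPK : ∀ i, ∀ᵐ s ∂μ, P i s ∈ K)
    (hQK : ∀ i, ∀ᵐ s ∂μ, Q i s ∈ K)
    (hlim : Tendsto (fun i => ∫ s, ‖P i s - Q i s‖ ∂μ) l (𝓝 0)) :
    Tendsto (fun i => ∫ s, ‖G (P i s) - G (Q i s)‖ ∂μ) l (𝓝 0) := by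
  have hint (i : ι) : Integrable (fun s => ‖P i s - Q i s‖) μ :=
    ((integrable_comp_of_continuousOn hK continuousOn_id (hP i) (hPK i)).sub
      (integrable_comp_of_continuousOn hK continuousOn_id (hQ i) (hQK i))).norm
  have hintG (i : ι) : Integrable (fun s => ‖G (P i s) - G (Q i s)‖) μ :=
    ((integrable_comp_of_continuousOn hK hG (hP i) (hPK i)).sub
      (integrable_comp_of_continuousOn hK hG (hQ i) (hQK i))).norm
  refine tendsto_order.2 ⟨fun c hc => Eventually.of_forall fun i =>
    hc.trans_le (integral_nonneg fun s => norm_nonneg _), fun ε hε => ?_⟩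
  obtain ⟨δ, hδ, hδε⟩ := exists_pos_mul_lt hε (μ.real univ)
  obtain ⟨C, hC⟩ := exists_norm_sub_le_add_mul_of_continuousOn hK hG hδ
  have hlim' := (hlim.const_mul C).const_add (μ.real univ * δ)
  rw [mul_zero, add_zero] at hlim'
  filter_upwards [hlim'.eventually (gt_mem_nhds hδε)] with i hi
  calc ∫ s, ‖G (P i s) - G (Q i s)‖ ∂μ ≤ ∫ s, δ + C * ‖P i s - Q i s‖ ∂μ := by
        refine integral_mono_ae (hintG i) ((integrable_const δ).add ((hint i).const_mul C)) ?_
        filter_upwards [hPK i, hQK i] with s hs hs' using hC _ hs _ hs'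
    _ = μ.real univ * δ + C * ∫ s, ‖P i s - Q i s‖ ∂μ := by
        rw [integral_add (integrable_const δ) ((hint i).const_mul C), integral_const,
          integral_const_mul, smul_eq_mul]
    _ < ε := hi

lemma exists_tendstoUniformlyOn_of_lipschitzWith {E : Type*} [NormedAddCommGroup E] [ProperSpace E]
    {γ : ℕ → ℝ → E} {C : ℝ≥0} (hγ : ∀ k, LipschitzWith C (γ k)) {x₀ : E} {a b : ℝ} (hab : a ≤ b)
    (hγa : ∀ k, γ k a = x₀) :
    ∃ Γ : ℝ → E, Continuous Γ ∧ ∃ ψ : ℕ → ℕ, StrictMono ψ ∧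
      TendstoUniformlyOn (fun k => γ (ψ k)) Γ atTop (Icc a b) := by
  let G (k : ℕ) : BoundedContinuousFunction (Icc a b) E :=
    .mkOfCompact ⟨fun s => γ k s, (hγ k).continuous.comp continuous_subtype_val⟩
  have hcompact : IsCompact (closure (range G)) := by
    refine BoundedContinuousFunction.arzela_ascoli (closedBall x₀ (C * (b - a)))
      (isCompact_closedBall _ _) _ ?_ (LipschitzWith.uniformEquicontinuous _ C ?_).equicontinuous
    · rintro _ s ⟨k, rfl⟩
      refine mem_closedBall.2 ((hγa k ▸ (hγ k).dist_le_mul s a).trans ?_)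
      rw [Real.dist_eq, abs_of_nonneg (sub_nonneg.2 s.2.1)]
      gcongr
      exact s.2.2
    · rintro ⟨_, k, rfl⟩
      exact (hγ k).comp (LipschitzWith.subtype_val _) |>.weaken (mul_one C).le
  obtain ⟨Γ, -, ψ, hψ, hlim⟩ :=
    hcompact.tendsto_subseq fun k => subset_closure (mem_range_self k)
  refine ⟨IccExtend hab Γ, Γ.continuous.Icc_extend', ψ, hψ, ?_⟩
  have hval : IccExtend hab Γ ∘ Subtype.val = Γ := funext (IccExtend_val hab Γ)
  rw [tendstoUniformlyOn_iff_tendstoUniformly_comp_coe, hval]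
  exact BoundedContinuousFunction.tendsto_iff_tendstoUniformly.1 hlim

/-- A weak cluster point, read off through the closed convex sets. -/
lemma exists_mem_of_forall_eventually_mem_convex {H ι : Type*} [NormedAddCommGroup H]
    [InnerProductSpace ℝ H] [CompleteSpace H] {l : Filter ι} [l.NeBot] {u : ι → H} {R : ℝ}
    (hu : ∀ i, ‖u i‖ ≤ R) :
    ∃ w, ∀ A, IsClosed A → Convex ℝ A → (∀ᶠ i in l, u i ∈ A) → w ∈ A := by
  let ψ (i : ι) : WeakDual ℝ H := (InnerProductSpace.toDual ℝ H (u i)).toWeakDual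
  have hψ (i : ι) : ψ i ∈ WeakDual.toStrongDual ⁻¹' closedBall (0 : StrongDual ℝ H) R := by
    simpa [ψ] using hu i
  obtain ⟨ψ₀, -, hψ₀⟩ := (WeakDual.isCompact_closedBall (0 : StrongDual ℝ H) R)
    |>.ultrafilter_le_nhds ((Ultrafilter.of l).map ψ)
      (tendsto_principal.2 (Eventually.of_forall hψ))
  refine ⟨(InnerProductSpace.toDual ℝ H).symm (WeakDual.toStrongDual ψ₀),
    fun A hA_closed hA_convex hA => by_contra fun hw => ?_⟩
  obtain ⟨f, c, hfw, hfA⟩ := geometric_hahn_banach_point_closed hA_convex hA_closed hw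
  set a := (InnerProductSpace.toDual ℝ H).symm f
  have hf (x : H) : f x = inner ℝ x a := by
    rw [real_inner_comm, InnerProductSpace.toDual_symm_apply]
  have hlim : Tendsto (fun i => ψ i a) (Ultrafilter.of l) (𝓝 (ψ₀ a)) :=
    (WeakDual.eval_continuous a).continuousAt.tendsto.comp hψ₀
  have hc : c ≤ ψ₀ a := ge_of_tendsto hlim <| by
    filter_upwards [Ultrafilter.of_le l hA] with i hi
    exact ((hfA _ hi).trans_eq (hf _)).le
  rw [hf, InnerProductSpace.toDual_symm_apply] at hfw
  exact hfw.not_ge hc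

/-- A bounded Carathéodory function `Θ`, convex in its second variable, with that variable ranging
over `U`. Measurability is only asked for along the measurable selections of `U`. -/
structure IsConvexIntegrand {Ω W : Type*} [MeasurableSpace Ω] [NormedAddCommGroup W]
    [NormedSpace ℝ W] (μ : Measure Ω) (U : Set W) (Θ : Ω → W → ℝ) : Prop where
  aestronglyMeasurable_comp : ∀ w : Ω → W, AEStronglyMeasurable w μ → (∀ᵐ s ∂μ, w s ∈ U) →
    AEStronglyMeasurable (fun s => Θ s (w s)) μ
  continuousOn : ∀ᵐ s ∂μ, ContinuousOn (Θ s) U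
  convexOn : ∀ᵐ s ∂μ, ConvexOn ℝ U (Θ s)
  bounded : ∃ C, ∀ᵐ s ∂μ, ∀ u ∈ U, ‖Θ s u‖ ≤ C

namespace IsConvexIntegrand

variable {Ω W : Type*} [MeasurableSpace Ω] [NormedAddCommGroup W] [NormedSpace ℝ W]
  {μ : Measure Ω} {U : Set W} {Θ : Ω → W → ℝ}

lemma comp_continuousLinearEquiv {W' : Type*} [NormedAddCommGroup W'] [NormedSpace ℝ W']
    (hΘ : IsConvexIntegrand μ U Θ) (e : W' ≃L[ℝ] W) :
    IsConvexIntegrand μ (e ⁻¹' U) fun s u => Θ s (e u) where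
  aestronglyMeasurable_comp _ hw hwU :=
    hΘ.aestronglyMeasurable_comp _ (e.continuous.comp_aestronglyMeasurable hw) hwU
  continuousOn := hΘ.continuousOn.mono fun _ hs => hs.comp e.continuous.continuousOn fun _ => id
  convexOn := hΘ.convexOn.mono fun _ hs => hs.comp_linearMap e.toLinearEquiv.toLinearMap
  bounded := hΘ.bounded.imp fun _ hC => hC.mono fun _ hs u => hs (e u)

lemma indicator (hU : Convex ℝ U) (hΘ : IsConvexIntegrand μ U Θ) {A : Set Ω}
    (hA : MeasurableSet A) :
    IsConvexIntegrand μ U fun s u => A.indicator (fun s => Θ s u) s where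
  aestronglyMeasurable_comp w hw hwU := (hΘ.aestronglyMeasurable_comp w hw hwU).indicator hA
  continuousOn := hΘ.continuousOn.mono fun s hs => by
    by_cases hsA : s ∈ A <;> simp [hsA, hs, continuousOn_const]
  convexOn := hΘ.convexOn.mono fun s hs => by
    by_cases hsA : s ∈ A
    · simpa only [indicator_of_mem hsA] using hs
    · simpa only [indicator_of_notMem hsA] using convexOn_const 0 hU
  bounded := hΘ.bounded.imp fun _ hC => hC.mono fun _ hs u hu =>
    (norm_indicator_le_norm_self _ _).trans (hs u hu)

variable [IsFiniteMeasure μ] {w : Ω → W}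

lemma integrable (hΘ : IsConvexIntegrand μ U Θ) (hw : AEStronglyMeasurable w μ)
    (hwU : ∀ᵐ s ∂μ, w s ∈ U) : Integrable (fun s => Θ s (w s)) μ := by
  obtain ⟨C, hC⟩ := hΘ.bounded
  refine .of_bound (hΘ.aestronglyMeasurable_comp w hw hwU) C ?_
  filter_upwards [hC, hwU] with s hs hsU using hs _ hsU

lemma convex_setOf_integral_le (hΘ : IsConvexIntegrand μ U Θ) (hU : Convex ℝ U) (c : ℝ) :
    Convex ℝ {w : Lp W 2 μ | (∀ᵐ s ∂μ, w s ∈ U) ∧ ∫ s, Θ s (w s) ∂μ ≤ c} := by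
  rintro w₁ ⟨hw₁, hc₁⟩ w₂ ⟨hw₂, hc₂⟩ a b ha hb hab
  have hcomb : ⇑(a • w₁ + b • w₂) =ᵐ[μ] fun s => a • w₁ s + b • w₂ s := by
    filter_upwards [Lp.coeFn_add (a • w₁) (b • w₂), Lp.coeFn_smul a w₁, Lp.coeFn_smul b w₂]
      with s h h₁ h₂
    rw [h, Pi.add_apply, h₁, h₂, Pi.smul_apply, Pi.smul_apply]
  have hcombU : ∀ᵐ s ∂μ, (a • w₁ + b • w₂ : Lp W 2 μ) s ∈ U := by
    filter_upwards [hcomb, hw₁, hw₂] with s hs h₁ h₂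
    exact hs ▸ hU h₁ h₂ ha hb hab
  have hint (v : Lp W 2 μ) (hv : ∀ᵐ s ∂μ, v s ∈ U) : Integrable (fun s => Θ s (v s)) μ :=
    hΘ.integrable (Lp.aestronglyMeasurable v) hv
  refine ⟨hcombU, ?_⟩
  calc ∫ s, Θ s ((a • w₁ + b • w₂ : Lp W 2 μ) s) ∂μ
      ≤ ∫ s, a * Θ s (w₁ s) + b * Θ s (w₂ s) ∂μ := by
        refine integral_mono_ae (hint _ hcombU)
          (((hint w₁ hw₁).const_mul a).add ((hint w₂ hw₂).const_mul b)) ?_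
        filter_upwards [hcomb, hw₁, hw₂, hΘ.convexOn] with s hs h₁ h₂ hconv
        simpa only [hs, smul_eq_mul] using hconv.2 h₁ h₂ ha hb hab
    _ = a * ∫ s, Θ s (w₁ s) ∂μ + b * ∫ s, Θ s (w₂ s) ∂μ := by
        rw [integral_add ((hint w₁ hw₁).const_mul a) ((hint w₂ hw₂).const_mul b),
          integral_const_mul, integral_const_mul]
    _ ≤ a * c + b * c := by gcongr
    _ = c := by rw [← add_mul, hab, one_mul]

lemma isClosed_setOf_integral_le (hΘ : IsConvexIntegrand μ U Θ) (hU : IsClosed U) (c : ℝ) :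
    IsClosed {w : Lp W 2 μ | (∀ᵐ s ∂μ, w s ∈ U) ∧ ∫ s, Θ s (w s) ∂μ ≤ c} := by
  refine IsSeqClosed.isClosed fun w w₀ hw hlim => ?_
  obtain ⟨σ, -, hσ⟩ := (tendstoInMeasure_of_tendsto_Lp hlim).exists_seq_tendsto_ae
  have hwU : ∀ᵐ s ∂μ, ∀ i, w (σ i) s ∈ U := ae_all_iff.2 fun i => (hw (σ i)).1
  have hw₀U : ∀ᵐ s ∂μ, w₀ s ∈ U := by
    filter_upwards [hσ, hwU] with s hs hsU
    exact hU.mem_of_tendsto hs (Eventually.of_forall hsU)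
  obtain ⟨C, hC⟩ := hΘ.bounded
  refine ⟨hw₀U, le_of_tendsto' (x := atTop) ?_ fun i => (hw (σ i)).2⟩
  refine tendsto_integral_of_dominated_convergence (fun _ => C)
    (fun i => hΘ.aestronglyMeasurable_comp _ (Lp.aestronglyMeasurable _) (hw (σ i)).1)
    (integrable_const C) (fun i => ?_) ?_
  · filter_upwards [hC, (hw (σ i)).1] with s hs hsU using hs _ hsU
  · filter_upwards [hσ, hwU, hw₀U, hΘ.continuousOn] with s hs hsU hs₀ hcont
    exact (hcont _ hs₀).tendsto.comp
      (tendsto_nhdsWithin_iff.2 ⟨hs, Eventually.of_forall hsU⟩)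

end IsConvexIntegrand

lemma exists_integral_le_of_eventually_integral_le_of_inner {Ω W : Type*} [MeasurableSpace Ω]
    {μ : Measure Ω} [IsFiniteMeasure μ] [NormedAddCommGroup W] [InnerProductSpace ℝ W]
    [CompleteSpace W] {U : Set W} (hU_closed : IsClosed U) (hU_bdd : Bornology.IsBounded U)
    (hU_convex : Convex ℝ U) {u : ℕ → Ω → W} (hu : ∀ k, AEStronglyMeasurable (u k) μ)
    (huU : ∀ k, ∀ᵐ s ∂μ, u k s ∈ U) :
    ∃ w : Ω → W, AEStronglyMeasurable w μ ∧ (∀ᵐ s ∂μ, w s ∈ U) ∧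
      ∀ Θ, IsConvexIntegrand μ U Θ → ∀ c, (∀ᶠ k in atTop, ∫ s, Θ s (u k s) ∂μ ≤ c) →
        ∫ s, Θ s (w s) ∂μ ≤ c := by
  obtain ⟨R, hR⟩ := hU_bdd.exists_norm_le
  have hmem (k : ℕ) : MemLp (u k) 2 μ :=
    .of_bound (hu k) R ((huU k).mono fun s hs => hR _ hs)
  let v (k : ℕ) : Lp W 2 μ := (hmem k).toLp
  have hv_bdd : ∃ R', ∀ k, ‖v k‖ ≤ R' := by
    refine ⟨_, fun k => Lp.norm_le_of_ae_bound (C := max R 0) (le_max_right R 0) ?_⟩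
    filter_upwards [(hmem k).coeFn_toLp, huU k] with s hs hsU
    exact hs ▸ (hR _ hsU).trans (le_max_left _ _)
  obtain ⟨R', hR'⟩ := hv_bdd
  obtain ⟨w, hw⟩ := exists_mem_of_forall_eventually_mem_convex (l := atTop) hR'
  have hsublevel (Θ) (hΘ : IsConvexIntegrand μ U Θ) (c : ℝ)
      (hc : ∀ᶠ k in atTop, ∫ s, Θ s (u k s) ∂μ ≤ c) :
      (∀ᵐ s ∂μ, w s ∈ U) ∧ ∫ s, Θ s (w s) ∂μ ≤ c := by
    refine hw _ (hΘ.isClosed_setOf_integral_le hU_closed c)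
      (hΘ.convex_setOf_integral_le hU_convex c) (hc.mono fun k hk => ⟨?_, ?_⟩)
    · filter_upwards [(hmem k).coeFn_toLp, huU k] with s hs hsU using hs ▸ hsU
    · refine (integral_congr_ae ?_).trans_le hk
      filter_upwards [(hmem k).coeFn_toLp] with s hs
      simp only [v, hs]
  have hzero : IsConvexIntegrand μ U fun _ _ => 0 :=
    ⟨fun _ _ _ => aestronglyMeasurable_const, ae_of_all _ fun _ => continuousOn_const,
      ae_of_all _ fun _ => convexOn_const 0 hU_convex, 0, by simp⟩
  exact ⟨w, Lp.aestronglyMeasurable w, (hsublevel _ hzero 0 (by simp)).1,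
    fun Θ hΘ c hc => (hsublevel Θ hΘ c hc).2⟩

theorem exists_integral_le_of_eventually_integral_le {Ω W : Type*} [MeasurableSpace Ω]
    [Nonempty Ω] {μ : Measure Ω} [IsFiniteMeasure μ] [NormedAddCommGroup W] [NormedSpace ℝ W]
    [FiniteDimensional ℝ W] [MeasurableSpace W] [BorelSpace W] {U : Set W} (hU : IsCompact U)
    (hU_convex : Convex ℝ U) {u : ℕ → Ω → W} (hu : ∀ k, Measurable (u k))
    (huU : ∀ k s, u k s ∈ U) :
    ∃ w : Ω → W, Measurable w ∧ (∀ s, w s ∈ U) ∧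
      ∀ Θ, IsConvexIntegrand μ U Θ → ∀ c, (∀ᶠ k in atTop, ∫ s, Θ s (u k s) ∂μ ≤ c) →
        ∫ s, Θ s (w s) ∂μ ≤ c := by
  have hU_ne : U.Nonempty := ⟨u 0 (Classical.arbitrary Ω), huU _ _⟩
  let e : W ≃L[ℝ] _ := toEuclidean
  have hpre : e.symm ⁻¹' U = e '' U := (e.toEquiv.image_eq_preimage_symm U).symm
  have hcompact : IsCompact (e.symm ⁻¹' U) := hpre ▸ hU.image e.continuous
  obtain ⟨w, hw, hwU, hle⟩ := exists_integral_le_of_eventually_integral_le_of_inner (μ := μ)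
    hcompact.isClosed hcompact.isBounded (hU_convex.linear_preimage e.symm.toLinearMap)
    (u := fun k s => e (u k s))
    (fun k => e.continuous.comp_aestronglyMeasurable (hu k).aestronglyMeasurable)
    (fun k => ae_of_all _ fun s => by simpa using huU k s)
  have hw' : AEMeasurable (fun s => e.symm (w s)) μ :=
    (e.symm.continuous.comp_aestronglyMeasurable hw).aemeasurable
  obtain ⟨w', hw'_meas, hw'U, hww'⟩ :=
    hw'.exists_ae_eq_range_subset hwU hU_ne
  refine ⟨w', hw'_meas, range_subset_iff.1 hw'U, fun Θ hΘ c hc => ?_⟩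
  calc ∫ s, Θ s (w' s) ∂μ = ∫ s, Θ s (e.symm (w s)) ∂μ := by
        refine integral_congr_ae ?_
        filter_upwards [hww'] with s hs
        rw [hs]
    _ ≤ c := hle _ (hΘ.comp_continuousLinearEquiv e.symm) c (by simpa using hc)

lemma intervalIntegrable_of_norm_le {F : Type*} [NormedAddCommGroup F] {g : ℝ → F} {C : ℝ}
    (hg : AEStronglyMeasurable g volume) (hC : ∀ s, ‖g s‖ ≤ C) (a b : ℝ) :
    IntervalIntegrable g volume a b :=
  (intervalIntegrable_const (c := C)).mono_fun hg.restrict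
    (Eventually.of_forall fun s => (hC s).trans (Real.le_norm_self C))

lemma bddBelow_range_of_lipschitzOnWith {ι Z : Type*} [PseudoMetricSpace Z] {F : ι → Z → ℝ}
    {s : Set Z} {k : ℝ≥0} (hF : ∀ i, LipschitzOnWith k (F i) s) {a b : Z} (ha : a ∈ s)
    (hb : b ∈ s) (hbdd : BddBelow (range fun i => F i a)) : BddBelow (range fun i => F i b) := by
  obtain ⟨c, hc⟩ := hbdd
  refine ⟨c - k * dist a b, forall_mem_range.2 fun i => ?_⟩
  have hca : c ≤ F i a := hc (mem_range_self i)
  linarith [(hF i).le_add_mul ha hb]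

lemma lipschitzOnWith_ciInf {ι Z : Type*} [Nonempty ι] [PseudoMetricSpace Z] {F : ι → Z → ℝ}
    {s : Set Z} {k : ℝ≥0} (hF : ∀ i, LipschitzOnWith k (F i) s)
    (hbdd : ∀ z ∈ s, BddBelow (range fun i => F i z)) :
    LipschitzOnWith k (fun z => ⨅ i, F i z) s := by
  refine LipschitzOnWith.of_le_add_mul k fun a ha b hb => ?_
  rw [← sub_le_iff_le_add]
  refine le_ciInf fun i => sub_le_iff_le_add.2 ?_
  exact (ciInf_le (hbdd a ha) i).trans ((hF i).le_add_mul ha hb)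

section Mollification
variable {G : Type*} [NormedAddCommGroup G] [NormedSpace ℝ G] [FiniteDimensional ℝ G]
  [MeasurableSpace G] [BorelSpace G] {μ : Measure G} [μ.IsAddHaarMeasure] {c : G}

lemma normed_convolution_le_add (φ : ContDiffBump c) {W : G → ℝ} (hW : Continuous W) {z w : G}
    {D : ℝ} (hD : ∀ y ∈ ball c φ.rOut, W (z - y) ≤ W (w - y) + D) :
    (φ.normed μ ⋆[ContinuousLinearMap.lsmul ℝ ℝ, μ] W) z ≤
      (φ.normed μ ⋆[ContinuousLinearMap.lsmul ℝ ℝ, μ] W) w + D := by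
  have hint (x : G) : Integrable (fun y => φ.normed μ y * W (x - y)) μ :=
    (φ.continuous_normed.mul (by fun_prop)).integrable_of_hasCompactSupport
      φ.hasCompactSupport_normed.mul_right
  simp only [convolution_def, ContinuousLinearMap.lsmul_apply, smul_eq_mul]
  calc ∫ y, φ.normed μ y * W (z - y) ∂μ
      ≤ ∫ y, φ.normed μ y * W (w - y) + φ.normed μ y * D ∂μ := by
        refine integral_mono (hint z) ((hint w).add (φ.integrable_normed.mul_const D)) fun y => ?_
        by_cases hy : y ∈ ball c φ.rOut
        · simpa only [mul_add] using mul_le_mul_of_nonneg_left (hD y hy) (φ.nonneg_normed y)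
        · rw [← φ.support_normed_eq (μ := μ), Function.notMem_support] at hy
          simp [hy]
    _ = ∫ y, φ.normed μ y * W (w - y) ∂μ + D := by
        rw [integral_add (hint w) (φ.integrable_normed.mul_const D), integral_mul_const,
          φ.integral_normed, one_mul]

lemma exists_dist_normed_convolution_lt {W : G → ℝ} (hW : Continuous W) {S : Set G}
    (hS : IsCompact S) {ε : ℝ} (hε : 0 < ε) :
    ∃ ρ > 0, ∀ (c : G) (φ : ContDiffBump c), ‖c‖ + φ.rOut ≤ ρ → ∀ z ∈ S,
      dist ((φ.normed μ ⋆[ContinuousLinearMap.lsmul ℝ ℝ, μ] W) z) (W z) ≤ ε := by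
  obtain ⟨ρ, hρ, hW_near⟩ := Metric.mem_uniformity_dist.1 <|
    hS.uniformContinuousAt_of_continuousAt W (fun z _ => hW.continuousAt) (dist_mem_uniformity hε)
  refine ⟨ρ, hρ, fun c φ hφ z hz => ?_⟩
  refine dist_convolution_le (R := ρ) hε.le ?_ φ.nonneg_normed φ.integral_normed
    hW.aestronglyMeasurable fun w hw => ?_
  · rw [φ.support_normed_eq]
    refine ball_subset_ball' ?_
    rwa [dist_zero_right, add_comm]
  · rw [dist_comm]
    exact le_of_lt (hW_near (mem_ball'.1 hw) hz)

end Mollification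

lemma neg_le_fderiv_of_eventually_sub_smul_le {G : Type*} [NormedAddCommGroup G] [NormedSpace ℝ G]
    {v : G → ℝ} {z ξ : G} (hv : DifferentiableAt ℝ v z) {c : ℝ → ℝ} {c₀ : ℝ}
    (hc : Tendsto c (𝓝[>] 0) (𝓝 c₀))
    (hle : ∀ᶠ σ in 𝓝[>] (0 : ℝ), v (z - σ • ξ) ≤ v z + σ * c σ) :
    -c₀ ≤ fderiv ℝ v z ξ := by
  have hline := hv.hasFDerivAt.hasLineDerivAt (-ξ)
  rw [map_neg] at hline
  have hslope := hline.tendsto_slope_zero_right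
  refine neg_le.1 (le_of_tendsto_of_tendsto hslope hc ?_)
  filter_upwards [hle, self_mem_nhdsWithin] with σ hσ hσ_pos
  rw [smul_neg, ← sub_eq_add_neg, smul_eq_mul, inv_mul_le_iff₀ hσ_pos]
  linarith

/-- A Bolza optimal control problem: the state of velocity `velocity q` under the control value `q`
is steered up to the time `horizon`, at the running cost `running q (t, x)` and the terminal cost
`terminal x`. The costs are Lipschitz in `(t, x)`, and the velocity does not depend on the state, so
that every measurable control has an explicit trajectory. -/
structure BolzaProblem (C E : Type*) [MeasurableSpace C] [NormedAddCommGroup E]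
    [MeasurableSpace E] where
  horizon : ℝ
  velocity : C → E
  running : C → ℝ × E → ℝ
  terminal : E → ℝ
  bound : ℝ
  lip : ℝ≥0
  measurable_velocity : Measurable velocity
  measurable_running : Measurable (Function.uncurry running)
  norm_velocity_le : ∀ q, ‖velocity q‖ ≤ bound
  abs_running_zero_le : ∀ q, |running q 0| ≤ bound
  lipschitzWith_running : ∀ q, LipschitzWith lip (running q)
  lipschitzWith_terminal : LipschitzWith lip terminal

namespace BolzaProblem

variable {C E : Type*} [MeasurableSpace C] [NormedAddCommGroup E] [NormedSpace ℝ E]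
  [MeasurableSpace E] (B : BolzaProblem C E)

/-- The trajectory through the point `z = (t, x)` of time-space driven by the control `p`. -/
def traj (p : ℝ → C) (z : ℝ × E) (s : ℝ) : E :=
  z.2 + ∫ σ in z.1..s, B.velocity (p σ)

/-- The running cost at time `s` along the trajectory through `z` driven by the control `p`. -/
def runningCost (p : ℝ → C) (z : ℝ × E) (s : ℝ) : ℝ :=
  B.running (p s) (s, B.traj p z s)

/-- The total cost of the control `p` from the point `z = (t, x)` of time-space on. It is an
interval integral, so it also makes sense for `t` beyond the horizon. -/
def cost (p : ℝ → C) (z : ℝ × E) : ℝ :=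
  (∫ s in z.1..B.horizon, B.runningCost p z s) + B.terminal (B.traj p z B.horizon)

/-- The value function: the infimal cost over all measurable controls. -/
def value (z : ℝ × E) : ℝ :=
  ⨅ p : {p : ℝ → C // Measurable p}, B.cost p z

variable {B}

omit [NormedSpace ℝ E] in
lemma abs_running_le (q : C) (z : ℝ × E) : |B.running q z| ≤ B.bound + B.lip * ‖z‖ := by
  have h := (B.lipschitzWith_running q).norm_sub_le z 0
  rw [sub_zero, Real.norm_eq_abs] at h
  linarith [abs_sub_abs_le_abs_sub (B.running q z) (B.running q 0), B.abs_running_zero_le q]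

lemma traj_sub (p : ℝ → C) (t : ℝ) (x x' : E) (s : ℝ) :
    B.traj p (t, x) s - B.traj p (t, x') s = x - x' :=
  add_sub_add_right_eq_sub ..

lemma norm_traj_sub_snd_le (p : ℝ → C) (z : ℝ × E) (s : ℝ) :
    ‖B.traj p z s - z.2‖ ≤ B.bound * |s - z.1| := by
  rw [traj, add_sub_cancel_left]
  exact intervalIntegral.norm_integral_le_of_norm_le_const fun σ _ => B.norm_velocity_le (p σ)

instance [Nonempty C] : Nonempty {p : ℝ → C // Measurable p} :=
  ⟨⟨fun _ => Classical.arbitrary C, measurable_const⟩⟩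

lemma value_horizon [Nonempty C] (x : E) : B.value (B.horizon, x) = B.terminal x := by
  simp [value, cost, traj]

lemma abs_integral_runningCost_le (p : ℝ → C) {R : ℝ} {z : ℝ × E} (hz : ‖z‖ ≤ R)
    {t : ℝ} (ht : |t| ≤ R) :
    |∫ s in z.1..t, B.runningCost p z s| ≤
      (B.bound + B.lip * (R + B.bound * (R + R))) * |t - z.1| := by
  have hbound : 0 ≤ B.bound := (norm_nonneg _).trans (B.norm_velocity_le (p 0))
  have hR : 0 ≤ R := (norm_nonneg z).trans hz
  have hzt : |z.1| ≤ R := (norm_fst_le z).trans hz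
  rw [← Real.norm_eq_abs]
  refine intervalIntegral.norm_integral_le_of_norm_le_const fun s hs => ?_
  have hsR : |s| ≤ R :=
    abs_le.2 (uIcc_subset_Icc (abs_le.1 hzt) (abs_le.1 ht) (uIoc_subset_uIcc hs))
  have htraj : ‖B.traj p z s‖ ≤ R + B.bound * (R + R) := by
    have hsz : |s - z.1| ≤ R + R := (abs_sub _ _).trans (add_le_add hsR hzt)
    calc ‖B.traj p z s‖ ≤ ‖z.2‖ + ‖B.traj p z s - z.2‖ := norm_le_norm_add_norm_sub' _ _
      _ ≤ R + B.bound * (R + R) := by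
          gcongr
          · exact (norm_snd_le z).trans hz
          · exact (norm_traj_sub_snd_le p z s).trans (by gcongr)
  rw [Real.norm_eq_abs]
  refine (abs_running_le _ _).trans ?_
  gcongr
  exact norm_prod_le_iff.2 ⟨hsR.trans (le_add_of_nonneg_right (by positivity)), htraj⟩

variable [BorelSpace E]

section
variable [SecondCountableTopology E] {p : ℝ → C} (hp : Measurable p)
include hp

omit [NormedSpace ℝ E] in
lemma intervalIntegrable_velocity (a b : ℝ) :
    IntervalIntegrable (fun s => B.velocity (p s)) volume a b :=
  intervalIntegrable_of_norm_le (B.measurable_velocity.comp hp).aestronglyMeasurable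
    (fun s => B.norm_velocity_le (p s)) a b

lemma continuous_traj (z : ℝ × E) : Continuous (B.traj p z) :=
  continuous_const.add (intervalIntegral.continuous_primitive (intervalIntegrable_velocity hp) z.1)

lemma traj_traj (z : ℝ × E) (t s : ℝ) : B.traj p (t, B.traj p z t) s = B.traj p z s := by
  simp only [traj, add_assoc]
  rw [intervalIntegral.integral_add_adjacent_intervals] <;> exact intervalIntegrable_velocity hp _ _

lemma intervalIntegrable_runningCost (z : ℝ × E) (a b : ℝ) :
    IntervalIntegrable (B.runningCost p z) volume a b := by
  have hcurve : Continuous fun s => (s, B.traj p z s) :=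
    continuous_id.prodMk (continuous_traj hp z)
  have hmeas : Measurable (B.runningCost p z) :=
    B.measurable_running.comp (hp.prodMk hcurve.measurable)
  have hdom : Continuous fun s => B.bound + B.lip * ‖(s, B.traj p z s)‖ := by fun_prop
  refine (hdom.intervalIntegrable a b).mono_fun hmeas.aestronglyMeasurable ?_
  exact Eventually.of_forall fun s => (abs_running_le _ _).trans (Real.le_norm_self _)

lemma cost_eq_integral_add_cost (z : ℝ × E) (t : ℝ) :
    B.cost p z = (∫ s in z.1..t, B.runningCost p z s) + B.cost p (t, B.traj p z t) := by
  have hrunning : B.runningCost p (t, B.traj p z t) = B.runningCost p z :=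
    funext fun s => by simp only [runningCost, traj_traj hp]
  simp only [cost, hrunning, traj_traj hp]
  rw [← add_assoc, intervalIntegral.integral_add_adjacent_intervals] <;>
    exact intervalIntegrable_runningCost hp z _ _

lemma abs_cost_sub_cost_le (t : ℝ) (x x' : E) :
    |B.cost p (t, x) - B.cost p (t, x')| ≤ B.lip * (|B.horizon - t| + 1) * ‖x - x'‖ := by
  have hrunning (s : ℝ) :
      ‖B.runningCost p (t, x) s - B.runningCost p (t, x') s‖ ≤ B.lip * ‖x - x'‖ := by
    refine ((B.lipschitzWith_running (p s)).norm_sub_le _ _).trans_eq ?_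
    rw [Prod.mk_sub_mk, traj_sub, sub_self, Prod.norm_mk, norm_zero,
      max_eq_right (norm_nonneg _)]
  have hterminal := (B.lipschitzWith_terminal).norm_sub_le (B.traj p (t, x) B.horizon)
    (B.traj p (t, x') B.horizon)
  rw [traj_sub] at hterminal
  calc |B.cost p (t, x) - B.cost p (t, x')|
      = |(∫ s in t..B.horizon, B.runningCost p (t, x) s - B.runningCost p (t, x') s) +
          (B.terminal (B.traj p (t, x) B.horizon) -
            B.terminal (B.traj p (t, x') B.horizon))| := by
        rw [intervalIntegral.integral_sub (intervalIntegrable_runningCost hp _ _ _)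
          (intervalIntegrable_runningCost hp _ _ _), cost, cost, add_sub_add_comm]
    _ ≤ B.lip * ‖x - x'‖ * |B.horizon - t| + B.lip * ‖x - x'‖ := by
        refine (abs_add_le _ _).trans (add_le_add ?_ hterminal)
        exact intervalIntegral.norm_integral_le_of_norm_le_const fun s _ => hrunning s
    _ = B.lip * (|B.horizon - t| + 1) * ‖x - x'‖ := by ring

end

lemma exists_lipschitzOnWith_cost [SecondCountableTopology E] (B : BolzaProblem C E) (R : ℝ) :
    ∃ L : ℝ≥0, ∀ p : ℝ → C, Measurable p → LipschitzOnWith L (B.cost p) (closedBall 0 R) := by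
  set a := B.bound + B.lip * (R + B.bound * (R + R))
  set b := B.lip * (|B.horizon| + R + 1) with hb
  refine ⟨(a + b * (B.bound + 1)).toNNReal, fun p hp => ?_⟩
  refine LipschitzOnWith.of_le_add_mul _ fun z hz w hw => ?_
  rw [mem_closedBall_zero_iff] at hz hw
  have hbound : 0 ≤ B.bound := (norm_nonneg _).trans (B.norm_velocity_le (p 0))
  have hR : 0 ≤ R := (norm_nonneg z).trans hz
  have hwt : |w.1| ≤ R := (norm_fst_le w).trans hw
  have htime : |w.1 - z.1| ≤ dist z w := by
    rw [dist_eq_norm, norm_sub_rev]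
    exact norm_fst_le (w - z)
  have hstate : ‖B.traj p z w.1 - w.2‖ ≤ (B.bound + 1) * dist z w := by
    calc ‖B.traj p z w.1 - w.2‖ ≤ ‖B.traj p z w.1 - z.2‖ + ‖z.2 - w.2‖ :=
          norm_sub_le_norm_sub_add_norm_sub _ _ _
      _ ≤ B.bound * dist z w + dist z w := by
          gcongr
          · exact (norm_traj_sub_snd_le p z w.1).trans (by gcongr)
          · exact (norm_snd_le (z - w)).trans_eq (dist_eq_norm z w).symm
      _ = (B.bound + 1) * dist z w := by ring
  calc B.cost p z
      = B.cost p w + ((∫ s in z.1..w.1, B.runningCost p z s) +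
          (B.cost p (w.1, B.traj p z w.1) - B.cost p (w.1, w.2))) := by
        rw [cost_eq_integral_add_cost hp z w.1]
        ring
    _ ≤ B.cost p w + (a * dist z w + b * ((B.bound + 1) * dist z w)) := by
        gcongr
        · refine (le_abs_self _).trans ((abs_integral_runningCost_le p hz hwt).trans ?_)
          gcongr
        · refine (le_abs_self _).trans ((abs_cost_sub_cost_le hp _ _ _).trans ?_)
          rw [hb]
          gcongr
          exact (abs_sub _ _).trans (by gcongr)
    _ = B.cost p w + (a + b * (B.bound + 1)) * dist z w := by ring
    _ ≤ _ := by
        gcongr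
        exact Real.le_coe_toNNReal _

section Value

variable [SecondCountableTopology E]

lemma bddBelow_range_cost (B : BolzaProblem C E) (z : ℝ × E) :
    BddBelow (range fun p : {p : ℝ → C // Measurable p} => B.cost p z) := by
  obtain ⟨L, hL⟩ := B.exists_lipschitzOnWith_cost (max ‖((B.horizon, 0) : ℝ × E)‖ ‖z‖)
  refine bddBelow_range_of_lipschitzOnWith (a := (B.horizon, 0))
    (fun p : {p : ℝ → C // Measurable p} => hL p.1 p.2)
    (mem_closedBall_zero_iff.2 (le_max_left _ _)) (mem_closedBall_zero_iff.2 (le_max_right _ _))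
    ⟨B.terminal 0, forall_mem_range.2 fun p => ?_⟩
  simp [cost, traj]

lemma value_le_cost {p : ℝ → C} (hp : Measurable p) (z : ℝ × E) : B.value z ≤ B.cost p z :=
  ciInf_le (B.bddBelow_range_cost z) ⟨p, hp⟩

variable [Nonempty C]

lemma continuous_value (B : BolzaProblem C E) : Continuous B.value := by
  refine continuous_iff_continuousAt.2 fun z => ?_
  obtain ⟨L, hL⟩ := B.exists_lipschitzOnWith_cost (‖z‖ + 1)
  have hlip : LipschitzOnWith L B.value (closedBall 0 (‖z‖ + 1)) :=
    lipschitzOnWith_ciInf (fun p : {p : ℝ → C // Measurable p} => hL p.1 p.2)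
      fun w _ => B.bddBelow_range_cost w
  refine hlip.continuousOn.continuousAt (mem_of_superset (ball_mem_nhds z one_pos) ?_)
  exact ball_subset_closedBall.trans (closedBall_subset_closedBall' (by simp [add_comm]))

lemma value_le_integral_add_value {p : ℝ → C} (hp : Measurable p) (z : ℝ × E) {t : ℝ}
    (hzt : z.1 ≤ t) (ht : t ≤ B.horizon) :
    B.value z ≤ (∫ s in z.1..t, B.runningCost p z s) + B.value (t, B.traj p z t) := by
  rw [← sub_le_iff_le_add']
  refine le_ciInf fun p' => sub_le_iff_le_add'.2 ?_
  let switch : ℝ → C := (Iic t).piecewise p p'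
  have hswitch : Measurable switch := hp.piecewise measurableSet_Iic p'.2
  have hbefore {s : ℝ} (hs : s ≤ t) : switch s = p s := piecewise_eq_of_mem _ _ _ hs
  have hafter {s : ℝ} (hs : t < s) : switch s = p'.1 s := piecewise_eq_of_notMem _ _ _ hs.not_ge
  have htraj_before {s : ℝ} (hs : s ∈ Icc z.1 t) : B.traj switch z s = B.traj p z s := by
    refine congrArg (z.2 + ·) (intervalIntegral.integral_congr fun σ hσ => ?_)
    rw [uIcc_of_le hs.1] at hσ
    simp only [hbefore (hσ.2.trans hs.2)]
  have htraj_after (x : E) {s : ℝ} (hs : t ≤ s) :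
      B.traj switch (t, x) s = B.traj p' (t, x) s := by
    refine congrArg (x + ·) (intervalIntegral.integral_congr_uIoo fun σ hσ => ?_)
    rw [uIoo_of_le hs] at hσ
    simp only [hafter hσ.1]
  have hrunning_before :
      ∫ s in z.1..t, B.runningCost switch z s = ∫ s in z.1..t, B.runningCost p z s := by
    refine intervalIntegral.integral_congr fun s hs => ?_
    rw [uIcc_of_le hzt] at hs
    simp only [runningCost, hbefore hs.2, htraj_before hs]
  have hcost_after (x : E) : B.cost switch (t, x) = B.cost p' (t, x) := by
    rw [cost, cost, htraj_after x ht]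
    congr 1
    refine intervalIntegral.integral_congr_uIoo fun s hs => ?_
    rw [uIoo_of_le ht] at hs
    simp only [runningCost, hafter hs.1, htraj_after x hs.1.le]
  calc B.value z ≤ B.cost switch z := value_le_cost hswitch z
    _ = _ := by
      rw [cost_eq_integral_add_cost hswitch z t, hrunning_before, htraj_before ⟨hzt, le_rfl⟩,
        hcost_after]

lemma value_le_add_value_add_smul [CompleteSpace E] {q : C} {z : ℝ × E} {σ c : ℝ} (hσ : 0 ≤ σ)
    (hz : z.1 + σ ≤ B.horizon)
    (hc : ∀ τ ∈ Icc 0 σ, B.running q (z + τ • (1, B.velocity q)) ≤ c) :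
    B.value z ≤ σ * c + B.value (z + σ • (1, B.velocity q)) := by
  have hq : Measurable fun _ : ℝ => q := measurable_const
  have hcurve (s : ℝ) :
      (s, B.traj (fun _ => q) z s) = z + (s - z.1) • ((1, B.velocity q) : ℝ × E) := by
    ext <;> simp [traj]
  have hcost : ∫ s in z.1..z.1 + σ, B.runningCost (fun _ => q) z s ≤ σ * c := by
    calc ∫ s in z.1..z.1 + σ, B.runningCost (fun _ => q) z s
        ≤ ∫ _ in z.1..z.1 + σ, c := by
          refine intervalIntegral.integral_mono_on (by linarith)
            (intervalIntegrable_runningCost hq z _ _) intervalIntegrable_const fun s hs => ?_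
          rw [runningCost, hcurve]
          exact hc _ ⟨by linarith [hs.1], by linarith [hs.2]⟩
      _ = σ * c := by simp
  have hvalue := value_le_integral_add_value hq z (t := z.1 + σ) (by linarith) hz
  rw [hcurve, add_sub_cancel_left] at hvalue
  linarith

lemma value_sub_smul_sub_le [CompleteSpace E] {q : C} {z y : ℝ × E} {σ ρ : ℝ} (hσ : 0 ≤ σ)
    (hy₀ : 0 ≤ y.1) (hy : ‖y‖ ≤ ρ) (hz : z.1 ≤ B.horizon) :
    B.value (z - σ • (1, B.velocity q) - y) ≤ B.value (z - y) +
      σ * (B.running q z + B.lip * (ρ + σ * ‖((1, B.velocity q) : ℝ × E)‖)) := by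
  set ξ : ℝ × E := (1, B.velocity q) with hξ
  have hend : z - σ • ξ - y + σ • ξ = z - y := by abel
  have hstep := value_le_add_value_add_smul (q := q) (z := z - σ • ξ - y) hσ
    (c := B.running q z + B.lip * (ρ + σ * ‖ξ‖)) (by simp [hξ]; linarith) fun τ hτ => ?_
  · rw [← hξ, hend] at hstep
    linarith
  refine ((B.lipschitzWith_running q).le_add_mul _ z).trans ?_
  gcongr
  calc dist (z - σ • ξ - y + τ • ξ) z = ‖y + (σ - τ) • ξ‖ := by
        rw [dist_eq_norm, ← norm_neg]
        congr 1
        module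
    _ ≤ ‖y‖ + (σ - τ) * ‖ξ‖ := by
        refine (norm_add_le _ _).trans_eq ?_
        rw [norm_smul, Real.norm_of_nonneg (sub_nonneg.2 hτ.2)]
    _ ≤ ρ + σ * ‖ξ‖ := by
        gcongr
        exact sub_le_self _ hτ.1

/-- Mollifying the value function with a bump at positive times only involves its values at times
before the horizon, where the dynamic programming inequality holds. -/
theorem exists_contDiff_subsolution [FiniteDimensional ℝ E] (B : BolzaProblem C E)
    {S : Set (ℝ × E)} (hS : IsCompact S) {ε : ℝ} (hε : 0 < ε) :
    ∃ v : ℝ × E → ℝ, ContDiff ℝ 1 v ∧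
      (∀ q z, z.1 ≤ B.horizon → -ε ≤ fderiv ℝ v z (1, B.velocity q) + B.running q z) ∧
      ∀ z ∈ S, |v z - B.value z| ≤ ε := by
  have hW := B.continuous_value
  obtain ⟨ρ, hρ, hclose⟩ := exists_dist_normed_convolution_lt (μ := .addHaar) hW hS hε
  obtain ⟨r, hr, hrρ, hrε⟩ : ∃ r > 0, 2 * r ≤ ρ ∧ B.lip * (2 * r) ≤ ε := by
    refine ⟨min ρ (ε / (B.lip + 1)) / 2, by positivity, ?_, ?_⟩
    · linarith [min_le_left ρ (ε / (B.lip + 1))]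
    · rw [mul_div_cancel₀ _ two_ne_zero]
      calc B.lip * min ρ (ε / (B.lip + 1)) ≤ (B.lip + 1) * (ε / (B.lip + 1)) := by
            gcongr
            · exact le_add_of_nonneg_right zero_le_one
            · exact min_le_right _ _
        _ = ε := by field_simp
  let φ : ContDiffBump ((r, 0) : ℝ × E) := ⟨r / 2, r, half_pos hr, half_lt_self hr⟩
  have hv : ContDiff ℝ 1 (φ.normed .addHaar ⋆[ContinuousLinearMap.lsmul ℝ ℝ, .addHaar] B.value) :=
    φ.hasCompactSupport_normed.contDiff_convolution_left _ φ.contDiff_normed hW.locallyIntegrable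
  have hcenter : ‖((r, 0) : ℝ × E)‖ = r := by simp [abs_of_pos hr, hr.le]
  refine ⟨_, hv, fun q z hz => ?_, hclose _ φ (by rw [hcenter]; linarith)⟩
  set ξ : ℝ × E := (1, B.velocity q)
  suffices -(B.running q z + B.lip * (2 * r + 0 * ‖ξ‖)) ≤ fderiv ℝ _ z ξ by linarith
  refine neg_le_fderiv_of_eventually_sub_smul_le (hv.differentiable one_ne_zero z)
    (c := fun σ => B.running q z + B.lip * (2 * r + σ * ‖ξ‖))
    ((Continuous.tendsto (by fun_prop) 0).mono_left nhdsWithin_le_nhds) ?_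
  filter_upwards [self_mem_nhdsWithin] with σ hσ
  refine normed_convolution_le_add φ hW fun y hy => ?_
  have hy_near : ‖y - (r, 0)‖ < r := mem_ball_iff_norm.1 hy
  have hy_time : |y.1 - r| < r := (norm_fst_le (y - (r, 0))).trans_lt hy_near
  refine value_sub_smul_sub_le hσ.le ?_ ?_ hz
  · linarith [neg_lt_of_abs_lt hy_time]
  · linarith [norm_le_norm_add_norm_sub' y (r, 0)]

end Value

end BolzaProblem

lemma lipschitzWith_add_mul_norm_sub {E : Type*} [SeminormedAddCommGroup E] (a : ℝ)
    (k : ℝ≥0) (y : E) :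
    LipschitzWith k fun x => a + k * ‖x - y‖ :=
  LipschitzWith.of_le_add_mul k fun x x' => by
    rw [add_assoc, ← mul_add, dist_eq_norm, add_comm ‖x' - y‖]
    gcongr
    exact norm_sub_le_norm_sub_add_norm_sub x x' y

lemma setIntegral_le_setIntegral_add_integral_norm_sub {Ω : Type*} [MeasurableSpace Ω]
    {μ : Measure Ω} {f g : Ω → ℝ} (hf : Integrable f μ) (hg : Integrable g μ) (A : Set Ω) :
    ∫ s in A, f s ∂μ ≤ (∫ s in A, g s ∂μ) + ∫ s, ‖g s - f s‖ ∂μ :=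
  calc ∫ s in A, f s ∂μ ≤ ∫ s in A, g s + ‖g s - f s‖ ∂μ :=
        integral_mono hf.restrict (hg.add (hg.sub hf).norm).restrict fun s => by
          have := neg_abs_le (g s - f s)
          rw [← Real.norm_eq_abs] at this
          dsimp only
          linarith
    _ = (∫ s in A, g s ∂μ) + ∫ s in A, ‖g s - f s‖ ∂μ :=
        integral_add hg.restrict (hg.sub hf).norm.restrict
    _ ≤ (∫ s in A, g s ∂μ) + ∫ s, ‖g s - f s‖ ∂μ :=
        add_le_add le_rfl <|
          setIntegral_le_integral (hg.sub hf).norm (ae_of_all _ fun s => norm_nonneg _)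

/-- An optimal control problem with compact constraint sets and continuous data, whose velocity
`field (t, x, u)` is affine and whose running cost `running (t, x, u)` is convex in the control
`u`. -/
structure ConvexControlProblem (E W : Type*) [NormedAddCommGroup E] [NormedSpace ℝ E]
    [NormedAddCommGroup W] [NormedSpace ℝ W] where
  horizon : ℝ
  state : Set E
  target : Set E
  control : Set W
  field : ℝ × E × W → E
  running : ℝ × E × W → ℝ
  terminal : E → ℝ
  horizon_pos : 0 < horizon
  isCompact_state : IsCompact state
  isCompact_target : IsCompact target
  isCompact_control : IsCompact control
  continuousOn_field : ContinuousOn field (Icc 0 horizon ×ˢ state ×ˢ control)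
  continuousOn_running : ContinuousOn running (Icc 0 horizon ×ˢ state ×ˢ control)
  continuousOn_terminal : ContinuousOn terminal target
  affine_field : ∀ t ∈ Icc 0 horizon, ∀ x ∈ state,
    ∃ A : W →ᵃ[ℝ] E, EqOn (fun u => field (t, x, u)) A control
  convexOn_running : ∀ t ∈ Icc 0 horizon, ∀ x ∈ state,
    ConvexOn ℝ control fun u => running (t, x, u)

namespace ConvexControlProblem

variable {E W : Type*} [NormedAddCommGroup E] [NormedSpace ℝ E] [NormedAddCommGroup W]
  [NormedSpace ℝ W] (P : ConvexControlProblem E W)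

/-- The set of all admissible triples of a time, a state and a control. -/
def domain : Set (ℝ × E × W) :=
  Icc 0 P.horizon ×ˢ P.state ×ˢ P.control

/-- The relaxed curve driven by a path `p` of admissible triples, whose time and state components
need not be the actual ones. -/
def curve (x₀ : E) (p : ℝ → P.domain) (t : ℝ) : E :=
  x₀ + ∫ s in 0..t, P.field (p s)

/-- How far the relaxed curve is from following the times and states of `p` and from ending
at `y`. -/
def gap (x₀ : E) (p : ℝ → P.domain) (y : E) : ℝ :=
  (∫ s in 0..P.horizon, ‖(s, P.curve x₀ p s) - ((p s).1.1, (p s).1.2.1)‖) +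
    ‖P.curve x₀ p P.horizon - y‖

variable {P}

lemma isCompact_domain : IsCompact P.domain :=
  isCompact_Icc.prod (P.isCompact_state.prod P.isCompact_control)

lemma norm_curve_sub_le_gap (x₀ : E) (p : ℝ → P.domain) (y : E) :
    ‖P.curve x₀ p P.horizon - y‖ ≤ P.gap x₀ p y :=
  le_add_of_nonneg_left <|
    intervalIntegral.integral_nonneg P.horizon_pos.le fun _ _ => norm_nonneg _

lemma gap_nonneg (x₀ : E) (p : ℝ → P.domain) (y : E) : 0 ≤ P.gap x₀ p y :=
  (norm_nonneg _).trans (norm_curve_sub_le_gap x₀ p y)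

variable (P) in
lemma exists_norm_field_le_and_abs_running_add_le (k : ℝ≥0) :
    ∃ M, ∀ q : P.domain, ‖P.field q‖ ≤ M ∧
      |P.running q + k * ‖(0 : ℝ × E) - (q.1.1, q.1.2.1)‖| ≤ M := by
  have hpenalty : ContinuousOn (fun z : ℝ × E × W =>
      P.running z + k * ‖(0 : ℝ × E) - (z.1, z.2.1)‖) P.domain :=
    P.continuousOn_running.add (Continuous.continuousOn (by fun_prop))
  obtain ⟨M, hM⟩ := isCompact_domain.exists_bound_of_continuousOn
    (P.continuousOn_field.prodMk hpenalty)
  exact ⟨M, fun q => norm_prod_le_iff.1 (hM q q.2)⟩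

lemma bddBelow_range_terminal_add (k : ℝ≥0) (x : E) :
    BddBelow (range fun y : P.target => P.terminal y + k * ‖x - y‖) := by
  obtain ⟨M, hM⟩ := P.isCompact_target.exists_bound_of_continuousOn P.continuousOn_terminal
  refine ⟨-M, forall_mem_range.2 fun y => ?_⟩
  exact le_add_of_le_of_nonneg (abs_le.1 (hM y y.2)).1 (by positivity)

variable [MeasurableSpace E] [BorelSpace E] [FiniteDimensional ℝ E] [MeasurableSpace W]
  [BorelSpace W] [FiniteDimensional ℝ W]

section Penalization
variable [Nonempty P.target]

variable (P) in
/-- The problem whose controls are arbitrary paths of admissible triples, all constraints (being at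
the prescribed times and states, ending in the target) being replaced by penalties of weight `k`. -/
def penalized (k : ℝ≥0) : BolzaProblem P.domain E where
  horizon := P.horizon
  velocity q := P.field q
  running q z := P.running q + k * ‖z - (q.1.1, q.1.2.1)‖
  terminal x := ⨅ y : P.target, (P.terminal y + k * ‖x - y‖)
  bound := (P.exists_norm_field_le_and_abs_running_add_le k).choose
  lip := k
  measurable_velocity :=
    (continuousOn_iff_continuous_domRestrict.1 P.continuousOn_field).measurable
  measurable_running := by
    have hrunning : Measurable fun q : P.domain => P.running q :=
      (continuousOn_iff_continuous_domRestrict.1 P.continuousOn_running).measurable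
    exact (hrunning.comp measurable_fst).add (Measurable.const_mul (by fun_prop) _)
  norm_velocity_le q := ((P.exists_norm_field_le_and_abs_running_add_le k).choose_spec q).1
  abs_running_zero_le q := ((P.exists_norm_field_le_and_abs_running_add_le k).choose_spec q).2
  lipschitzWith_running q := lipschitzWith_add_mul_norm_sub _ _ _
  lipschitzWith_terminal := lipschitzOnWith_univ.1 <| lipschitzOnWith_ciInf
    (fun _ => (lipschitzWith_add_mul_norm_sub _ _ _).lipschitzOnWith)
    fun _ _ => bddBelow_range_terminal_add _ _

lemma penalized_terminal_le (k : ℝ≥0) {y : E} (hy : y ∈ P.target) :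
    (P.penalized k).terminal y ≤ P.terminal y :=
  (ciInf_le (bddBelow_range_terminal_add k y) ⟨y, hy⟩).trans_eq (by simp)

end Penalization

section Curve
variable {p : ℝ → P.domain} (hp : Measurable p)
include hp

lemma intervalIntegrable_comp {F : Type*} [NormedAddCommGroup F] {G : ℝ × E × W → F}
    (hG : ContinuousOn G P.domain) (a b : ℝ) :
    IntervalIntegrable (fun s => G (p s)) volume a b :=
  have hP : Measurable fun s => (p s : ℝ × E × W) := measurable_subtype_coe.comp hp
  have hint (μ : Measure ℝ) [IsFiniteMeasure μ] : Integrable (fun s => G (p s)) μ :=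
    integrable_comp_of_continuousOn isCompact_domain hG hP.aemeasurable
      (ae_of_all _ fun s => (p s).2)
  ⟨hint _, hint _⟩

lemma continuous_curve (x₀ : E) : Continuous (P.curve x₀ p) :=
  continuous_const.add <| intervalIntegral.continuous_primitive
    (intervalIntegrable_comp hp P.continuousOn_field) 0

lemma intervalIntegrable_norm_sub {γ : ℝ → E} (hγ : Continuous γ) (a b : ℝ) :
    IntervalIntegrable (fun s => ‖(s, γ s) - ((p s).1.1, (p s).1.2.1)‖) volume a b :=
  ((continuous_id.prodMk hγ).intervalIntegrable a b |>.sub <|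
    intervalIntegrable_comp hp (G := fun z => (z.1, z.2.1)) (by fun_prop) a b).norm

variable [Nonempty P.target]

lemma exists_lt_of_cost_penalized_lt {k : ℝ≥0} {x₀ : E} {c : ℝ}
    (hc : (P.penalized k).cost p (0, x₀) < c) :
    ∃ y : P.target,
      (∫ s in 0..P.horizon, P.running (p s)) + P.terminal y + k * P.gap x₀ p y < c := by
  have hcost : (∫ s in 0..P.horizon, P.running (p s) +
        k * ‖(s, P.curve x₀ p s) - ((p s).1.1, (p s).1.2.1)‖) +
      ⨅ y : P.target, (P.terminal y + k * ‖P.curve x₀ p P.horizon - y‖) < c := hc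
  rw [← lt_sub_iff_add_lt', intervalIntegral.integral_add
    (intervalIntegrable_comp hp P.continuousOn_running _ _)
    ((intervalIntegrable_norm_sub hp (continuous_curve hp x₀) _ _).const_mul _),
    intervalIntegral.integral_const_mul] at hcost
  obtain ⟨y, hy⟩ := exists_lt_of_ciInf_lt hcost
  refine ⟨y, ?_⟩
  rw [gap]
  linarith

end Curve

section LowerClosure
variable {Γ : ℝ → E} (hΓ : Continuous Γ) (hΓ_state : ∀ t ∈ Icc 0 P.horizon, Γ t ∈ P.state)
include hΓ hΓ_state

lemma integrableOn_comp_curve {F : Type*} [NormedAddCommGroup F] {G : ℝ × E × W → F}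
    (hG : ContinuousOn G P.domain) {w : ℝ → W}
    (hw : AEMeasurable w (volume.restrict (Ioc 0 P.horizon)))
    (hwU : ∀ᵐ s ∂volume.restrict (Ioc 0 P.horizon), w s ∈ P.control) :
    IntegrableOn (fun s => G (s, Γ s, w s)) (Ioc 0 P.horizon) := by
  refine integrable_comp_of_continuousOn isCompact_domain hG
    (aemeasurable_id.prodMk (hΓ.aemeasurable.prodMk hw)) ?_
  filter_upwards [hwU, ae_restrict_mem measurableSet_Ioc] with s hsU hs
  exact ⟨Ioc_subset_Icc_self hs, hΓ_state s (Ioc_subset_Icc_self hs), hsU⟩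

lemma isConvexIntegrand_comp_curve {G : ℝ × E × W → ℝ} (hG : ContinuousOn G P.domain)
    (hG_convex : ∀ t ∈ Icc 0 P.horizon, ∀ x ∈ P.state, ConvexOn ℝ P.control fun u => G (t, x, u)) :
    IsConvexIntegrand (volume.restrict (Ioc 0 P.horizon)) P.control fun s u => G (s, Γ s, u) where
  aestronglyMeasurable_comp w hw hwU :=
    (integrableOn_comp_curve hΓ hΓ_state hG hw.aemeasurable hwU).aestronglyMeasurable
  continuousOn := by
    filter_upwards [ae_restrict_mem measurableSet_Ioc] with s hs
    exact hG.comp (by fun_prop) fun u hu =>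
      ⟨Ioc_subset_Icc_self hs, hΓ_state s (Ioc_subset_Icc_self hs), hu⟩
  convexOn := by
    filter_upwards [ae_restrict_mem measurableSet_Ioc] with s hs
    exact hG_convex s (Ioc_subset_Icc_self hs) _ (hΓ_state s (Ioc_subset_Icc_self hs))
  bounded := by
    obtain ⟨C, hC⟩ := isCompact_domain.exists_bound_of_continuousOn hG
    refine ⟨C, ?_⟩
    filter_upwards [ae_restrict_mem measurableSet_Ioc] with s hs u hu
    exact hC _ ⟨Ioc_subset_Icc_self hs, hΓ_state s (Ioc_subset_Icc_self hs), hu⟩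

variable {p : ℕ → ℝ → P.domain} (hp : ∀ k, Measurable (p k))
  (hlim : Tendsto (fun k => ∫ s in 0..P.horizon, ‖(s, Γ s) - ((p k s).1.1, (p k s).1.2.1)‖)
    atTop (𝓝 0))
include hp hlim

lemma tendsto_integral_norm_comp_sub_comp_curve {F : Type*} [NormedAddCommGroup F]
    {G : ℝ × E × W → F} (hG : ContinuousOn G P.domain) :
    Tendsto (fun k => ∫ s in Ioc 0 P.horizon, ‖G (p k s) - G (s, Γ s, (p k s).1.2.2)‖)
      atTop (𝓝 0) := by
  have hp' (k : ℕ) : Measurable fun s => (p k s : ℝ × E × W) := measurable_subtype_coe.comp (hp k)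
  refine tendsto_integral_norm_comp_sub_comp isCompact_domain hG (fun k => (hp' k).aemeasurable)
    (fun k => (measurable_id.prodMk (hΓ.measurable.prodMk (hp' k).snd.snd)).aemeasurable)
    (fun k => ae_of_all _ fun s => (p k s).2) (fun k => ?_) ?_
  · filter_upwards [ae_restrict_mem measurableSet_Ioc] with s hs
    exact ⟨Ioc_subset_Icc_self hs, hΓ_state s (Ioc_subset_Icc_self hs), (p k s).2.2.2⟩
  · refine hlim.congr fun k => ?_
    rw [intervalIntegral.integral_of_le P.horizon_pos.le]
    refine integral_congr_ae (ae_of_all _ fun s => ?_)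
    simp [Prod.norm_def, norm_sub_rev]

lemma exists_control_integral_le :
    ∃ u : ℝ → W, Measurable u ∧ (∀ s, u s ∈ P.control) ∧ ∀ G : ℝ × E × W → ℝ,
      ContinuousOn G P.domain →
      (∀ t ∈ Icc 0 P.horizon, ∀ x ∈ P.state, ConvexOn ℝ P.control fun u => G (t, x, u)) →
      ∀ t ∈ Icc 0 P.horizon, ∀ (b : ℕ → ℝ) (c : ℝ), Tendsto b atTop (𝓝 c) →
        (∀ k, ∫ s in 0..t, G (p k s) ≤ b k) → ∫ s in 0..t, G (s, Γ s, u s) ≤ c := by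
  have hcontrol : Convex ℝ P.control :=
    (P.convexOn_running 0 (left_mem_Icc.2 P.horizon_pos.le) _
      (hΓ_state 0 (left_mem_Icc.2 P.horizon_pos.le))).1
  have hv (k : ℕ) : Measurable fun s => (p k s).1.2.2 :=
    (measurable_subtype_coe.comp (hp k)).snd.snd
  obtain ⟨u, hu, huU, hle⟩ := exists_integral_le_of_eventually_integral_le
    (μ := volume.restrict (Ioc 0 P.horizon)) P.isCompact_control hcontrol hv
    fun k s => (p k s).2.2.2
  refine ⟨u, hu, huU, fun G hG hG_convex t ht b c hb hbound => ?_⟩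
  have hres : (volume.restrict (Ioc 0 P.horizon)).restrict (Ioc 0 t) = volume.restrict (Ioc 0 t) :=
    Measure.restrict_restrict_of_subset (Ioc_subset_Ioc_right ht.2)
  simp only [intervalIntegral.integral_of_le ht.1, ← hres] at hbound ⊢
  refine le_of_forall_gt_imp_ge_of_dense fun c' hc' => ?_
  rw [← integral_indicator measurableSet_Ioc]
  refine hle _ ((isConvexIntegrand_comp_curve hΓ hΓ_state hG hG_convex).indicator hcontrol
    measurableSet_Ioc) c' ?_
  have hsum := hb.add (tendsto_integral_norm_comp_sub_comp_curve hΓ hΓ_state hp hlim hG)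
  rw [add_zero] at hsum
  filter_upwards [hsum.eventually (gt_mem_nhds hc')] with k hk
  have hintp : IntegrableOn (fun s => G (p k s)) (Ioc 0 P.horizon) :=
    (intervalIntegrable_comp (hp k) hG 0 P.horizon).1
  have hintv : IntegrableOn (fun s => G (s, Γ s, (p k s).1.2.2)) (Ioc 0 P.horizon) :=
    integrableOn_comp_curve hΓ hΓ_state hG (hv k).aemeasurable (ae_of_all _ fun s => (p k s).2.2.2)
  refine (integral_indicator measurableSet_Ioc).trans_le ?_
  exact (setIntegral_le_setIntegral_add_integral_norm_sub hintv hintp _).trans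
    ((add_le_add_left (hbound k) _).trans hk.le)

lemma exists_control_of_tendsto_curve {x₀ : E}
    (hcurve : ∀ t ∈ Icc 0 P.horizon, Tendsto (fun k => P.curve x₀ (p k) t) atTop (𝓝 (Γ t))) :
    ∃ u : ℝ → W, Measurable u ∧ (∀ s, u s ∈ P.control) ∧
      (∀ t ∈ Icc 0 P.horizon, Γ t = x₀ + ∫ s in 0..t, P.field (s, Γ s, u s)) ∧
      ∀ (b : ℕ → ℝ) (c : ℝ), Tendsto b atTop (𝓝 c) →
        (∀ k, ∫ s in 0..P.horizon, P.running (p k s) ≤ b k) →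
        ∫ s in 0..P.horizon, P.running (s, Γ s, u s) ≤ c := by
  obtain ⟨u, hu, huU, hle⟩ := exists_control_integral_le hΓ hΓ_state hp hlim
  refine ⟨u, hu, huU, fun t ht => ?_, hle _ P.continuousOn_running P.convexOn_running _
    (right_mem_Icc.2 P.horizon_pos.le)⟩
  have hint : IntervalIntegrable (fun s => P.field (s, Γ s, u s)) volume 0 t := by
    rw [intervalIntegrable_iff_integrableOn_Ioc_of_le ht.1]
    exact (integrableOn_comp_curve hΓ hΓ_state P.continuousOn_field hu.aemeasurable
      (ae_of_all _ huU)).mono_set (Ioc_subset_Ioc_right ht.2)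
  have hdual_le (φ : StrongDual ℝ E) : φ (∫ s in 0..t, P.field (s, Γ s, u s)) ≤ φ (Γ t - x₀) := by
    rw [← φ.intervalIntegral_comp_comm hint]
    refine hle (fun z => φ (P.field z)) (φ.continuous.comp_continuousOn P.continuousOn_field)
      (fun s hs x hx => ?_) t ht _ _
      ((φ.continuous.tendsto _).comp ((hcurve t ht).sub_const x₀)) fun k => ?_
    · obtain ⟨A, hA⟩ := P.affine_field s hs x hx
      have hcontrol := (P.convexOn_running s hs x hx).1
      refine (((φ.toLinearMap.convexOn convex_univ).comp_affineMap A).subset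
        (subset_univ _) hcontrol).congr fun v hv => ?_
      simp [hA hv]
    · rw [φ.intervalIntegral_comp_comm (intervalIntegrable_comp (hp k) P.continuousOn_field 0 t)]
      simp [curve]
  rw [← sub_eq_iff_eq_add', SeparatingDual.eq_iff_forall_dual_eq (R := ℝ)]
  exact fun φ => (neg_le_neg_iff.1 (hdual_le (-φ))).antisymm (hdual_le φ)

end LowerClosure

section Minimizing
variable {Γ : ℝ → E} {x₀ : E}

variable (P) in
lemma exists_lipschitzWith_curve :
    ∃ C, ∀ (x₀ : E) (p : ℝ → P.domain), Measurable p → LipschitzWith C (P.curve x₀ p) := by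
  obtain ⟨C, hC⟩ := isCompact_domain.exists_bound_of_continuousOn P.continuousOn_field
  refine ⟨C.toNNReal, fun x₀ p hp => LipschitzWith.of_dist_le' fun s t => ?_⟩
  rw [dist_eq_norm, curve, curve, add_sub_add_left_eq_sub,
    intervalIntegral.integral_interval_sub_left
      (intervalIntegrable_comp hp P.continuousOn_field _ _)
      (intervalIntegrable_comp hp P.continuousOn_field _ _)]
  exact intervalIntegral.norm_integral_le_of_norm_le_const fun r _ => hC _ (p r).2

lemma tendsto_integral_norm_sub_of_tendsto_gap {p : ℕ → ℝ → P.domain} {y : ℕ → P.target}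
    (hp : ∀ k, Measurable (p k)) (hgap : Tendsto (fun k => P.gap x₀ (p k) (y k)) atTop (𝓝 0))
    (hΓ : Continuous Γ)
    (hcurve : TendstoUniformlyOn (fun k => P.curve x₀ (p k)) Γ atTop (Icc 0 P.horizon)) :
    Tendsto (fun k => ∫ s in 0..P.horizon, ‖(s, Γ s) - ((p k s).1.1, (p k s).1.2.1)‖)
      atTop (𝓝 0) := by
  refine tendsto_order.2 ⟨fun c hc => Eventually.of_forall fun k => hc.trans_le <|
    intervalIntegral.integral_nonneg P.horizon_pos.le fun s _ => norm_nonneg _, fun ε hε => ?_⟩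
  obtain ⟨δ, hδ, hδε⟩ := exists_pos_mul_lt (half_pos hε) P.horizon
  filter_upwards [Metric.tendstoUniformlyOn_iff.1 hcurve δ hδ,
    hgap.eventually (gt_mem_nhds (half_pos hε))] with k hk_curve hk_gap
  have hint := intervalIntegrable_norm_sub (hp k) (continuous_curve (hp k) x₀) 0 P.horizon
  calc ∫ s in 0..P.horizon, ‖(s, Γ s) - ((p k s).1.1, (p k s).1.2.1)‖
      ≤ ∫ s in 0..P.horizon, δ + ‖(s, P.curve x₀ (p k) s) - ((p k s).1.1, (p k s).1.2.1)‖ := by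
        refine intervalIntegral.integral_mono_on P.horizon_pos.le
          (intervalIntegrable_norm_sub (hp k) hΓ _ _) (intervalIntegrable_const.add hint)
          fun s hs => ?_
        refine (norm_sub_le_norm_sub_add_norm_sub _ (s, P.curve x₀ (p k) s) _).trans ?_
        gcongr
        simpa [Prod.norm_def, dist_eq_norm] using (hk_curve s hs).le
    _ = P.horizon * δ +
          ∫ s in 0..P.horizon, ‖(s, P.curve x₀ (p k) s) - ((p k s).1.1, (p k s).1.2.1)‖ := by
        rw [intervalIntegral.integral_add intervalIntegrable_const hint]
        simp
    _ < ε / 2 + ε / 2 :=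
        add_lt_add hδε ((le_add_of_nonneg_right (norm_nonneg _)).trans_lt hk_gap)
    _ = ε := add_halves ε

lemma mem_state_of_tendsto_integral_norm_sub {p : ℕ → ℝ → P.domain} (hp : ∀ k, Measurable (p k))
    (hΓ : Continuous Γ)
    (hlim : Tendsto (fun k => ∫ s in 0..P.horizon, ‖(s, Γ s) - ((p k s).1.1, (p k s).1.2.1)‖)
      atTop (𝓝 0)) : ∀ t ∈ Icc 0 P.horizon, Γ t ∈ P.state := by
  have hcont : Continuous fun s => infDist (Γ s) P.state := (continuous_infDist_pt _).comp hΓ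
  have hint_le : ∫ s in 0..P.horizon, infDist (Γ s) P.state ≤ 0 :=
    ge_of_tendsto' hlim fun k => intervalIntegral.integral_mono_on P.horizon_pos.le
      (hcont.intervalIntegrable _ _) (intervalIntegrable_norm_sub (hp k) hΓ _ _) fun s _ =>
        (infDist_le_dist_of_mem (p k s).2.2.1).trans <|
          (dist_eq_norm (Γ s) _).trans_le (norm_snd_le ((s, Γ s) - ((p k s).1.1, (p k s).1.2.1)))
  intro t ht
  rw [P.isCompact_state.isClosed.mem_iff_infDist_zero ⟨_, (p 0 0).2.2.1⟩]
  by_contra hne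
  exact hint_le.not_gt <| intervalIntegral.integral_pos P.horizon_pos hcont.continuousOn
    (fun s _ => infDist_nonneg) ⟨t, ht, infDist_nonneg.lt_of_ne' hne⟩

variable [Nonempty P.target] [Nonempty P.domain] {c : ℝ}
  (hc : ∀ k : ℕ, (P.penalized k).value (0, x₀) ≤ c)
include hc

lemma exists_minimizing_sequence :
    ∃ (p : ℕ → ℝ → P.domain) (y : ℕ → P.target), (∀ k, Measurable (p k)) ∧
      (∀ k, ∫ s in 0..P.horizon, P.running (p k s) ≤ c + 1 / (k + 1) - P.terminal (y k)) ∧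
      Tendsto (fun k => P.gap x₀ (p k) (y k)) atTop (𝓝 0) := by
  have hex (k : ℕ) : ∃ (p : ℝ → P.domain) (y : P.target), Measurable p ∧
      (∫ s in 0..P.horizon, P.running (p s)) + P.terminal y + k * P.gap x₀ p y
        < c + 1 / (k + 1) := by
    obtain ⟨p, hp⟩ := exists_lt_of_ciInf_lt
      ((hc k).trans_lt (lt_add_of_pos_right c (Nat.one_div_pos_of_nat (n := k))))
    obtain ⟨y, hy⟩ := exists_lt_of_cost_penalized_lt p.2 hp
    exact ⟨p, y, p.2, hy⟩
  choose p y hp hlt using hex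
  obtain ⟨M, hM⟩ := isCompact_domain.exists_bound_of_continuousOn P.continuousOn_running
  obtain ⟨M', hM'⟩ := P.isCompact_target.exists_bound_of_continuousOn P.continuousOn_terminal
  refine ⟨p, y, hp, fun k => ?_, squeeze_zero' (Eventually.of_forall fun k => gap_nonneg x₀ _ _) ?_
    (tendsto_const_div_atTop_nhds_zero_nat (c + 1 + M * P.horizon + M'))⟩
  · linarith [hlt k, mul_nonneg k.cast_nonneg (gap_nonneg x₀ (p k) (y k))]
  filter_upwards [eventually_gt_atTop 0] with k hk
  rw [le_div_iff₀' (by positivity)]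
  have hrunning : ‖∫ s in 0..P.horizon, P.running (p k s)‖ ≤ M * P.horizon := by
    simpa [abs_of_pos P.horizon_pos] using intervalIntegral.norm_integral_le_of_norm_le_const
      (a := 0) (b := P.horizon) fun s _ => hM _ (p k s).2
  have hone : 1 / ((k : ℝ) + 1) ≤ 1 := Nat.one_div_le_one_div k.zero_le |>.trans_eq (by simp)
  linarith [hlt k, (abs_le.1 hrunning).1, (abs_le.1 (hM' _ (y k).2)).1]

theorem exists_trajectory_le_of_value_penalized_le :
    ∃ (x : ℝ → E) (u : ℝ → W), Continuous x ∧ Measurable u ∧ (∀ t, u t ∈ P.control) ∧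
      (∀ t ∈ Icc 0 P.horizon, x t ∈ P.state) ∧ x P.horizon ∈ P.target ∧
      (∀ t ∈ Icc 0 P.horizon, x t = x₀ + ∫ s in 0..t, P.field (s, x s, u s)) ∧
      (∫ s in 0..P.horizon, P.running (s, x s, u s)) + P.terminal (x P.horizon) ≤ c := by
  obtain ⟨p, y, hp, hle, hgap⟩ := exists_minimizing_sequence hc
  obtain ⟨C, hC⟩ := P.exists_lipschitzWith_curve
  obtain ⟨x, hx, ψ, hψ, hunif⟩ := exists_tendstoUniformlyOn_of_lipschitzWith
    (fun k => hC x₀ (p k) (hp k)) P.horizon_pos.le (x₀ := x₀) (by simp [curve])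
  have hgapψ := hgap.comp hψ.tendsto_atTop
  have hlim := tendsto_integral_norm_sub_of_tendsto_gap (fun k => hp (ψ k)) hgapψ hx hunif
  have hstate := mem_state_of_tendsto_integral_norm_sub (fun k => hp (ψ k)) hx hlim
  have hy : Tendsto (fun k => (y (ψ k) : E)) atTop (𝓝 (x P.horizon)) := by
    simpa using (hunif.tendsto_at (right_mem_Icc.2 P.horizon_pos.le)).sub
      (squeeze_zero_norm (fun k => norm_curve_sub_le_gap x₀ (p (ψ k)) (y (ψ k))) hgapψ)
  have htarget : x P.horizon ∈ P.target :=
    P.isCompact_target.isClosed.mem_of_tendsto hy (Eventually.of_forall fun k => (y (ψ k)).2)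
  have hterminal : Tendsto (fun k => P.terminal (y (ψ k))) atTop (𝓝 (P.terminal (x P.horizon))) :=
    (P.continuousOn_terminal _ htarget).tendsto.comp
      (tendsto_nhdsWithin_iff.2 ⟨hy, Eventually.of_forall fun k => (y (ψ k)).2⟩)
  obtain ⟨u, hu, huU, hxu, hrunning⟩ := exists_control_of_tendsto_curve hx hstate
    (fun k => hp (ψ k)) hlim fun t ht => hunif.tendsto_at ht
  refine ⟨x, u, hx, hu, huU, hstate, htarget, hxu, le_sub_iff_add_le.1 ?_⟩
  refine hrunning _ _ ?_ fun k => hle (ψ k)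
  simpa using ((tendsto_one_div_add_atTop_nhds_zero_nat.comp hψ.tendsto_atTop).const_add c).sub
    hterminal

end Minimizing

end ConvexControlProblem

theorem integral_fderiv_comp_primitive {E : Type*} [NormedAddCommGroup E] [NormedSpace ℝ E]
    [CompleteSpace E] {v : ℝ × E → ℝ} (hv : ContDiff ℝ 1 v) {a b M : ℝ} {φ : ℝ → E}
    (hφ : IntervalIntegrable φ volume a b) (hM : ∀ t ∈ uIcc a b, ‖φ t‖ ≤ M) (x₀ : E) :
    ∫ t in a..b, fderiv ℝ v (t, x₀ + ∫ s in a..t, φ s) (1, φ t) =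
      v (b, x₀ + ∫ s in a..b, φ s) - v (a, x₀) := by
  set γ : ℝ → ℝ × E := fun t => (t, x₀ + ∫ s in a..t, φ s)
  have hprimitive : LipschitzOnWith M.toNNReal (fun t => x₀ + ∫ s in a..t, φ s) (uIcc a b) := by
    refine LipschitzOnWith.of_dist_le_mul fun t ht t' ht' => ?_
    have hint {r} (hr : r ∈ uIcc a b) : IntervalIntegrable φ volume a r :=
      hφ.mono_set (uIcc_subset_uIcc left_mem_uIcc hr)
    rw [dist_add_left, dist_eq_norm, Real.dist_eq,
      intervalIntegral.integral_interval_sub_left (hint ht) (hint ht')]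
    exact intervalIntegral.norm_integral_le_of_norm_le_const fun s hs =>
      (hM s (uIcc_subset_uIcc ht' ht (uIoc_subset_uIcc hs))).trans (Real.le_coe_toNNReal M)
  have hγ : LipschitzOnWith (max 1 M.toNNReal) γ (uIcc a b) :=
    LipschitzWith.id.lipschitzOnWith.prodMk hprimitive
  obtain ⟨C, hC⟩ := (hv.locallyLipschitz.locallyLipschitzOn (s := γ '' uIcc a b))
    |>.exists_lipschitzOnWith_of_compact (isCompact_uIcc.image_of_continuousOn hγ.continuousOn)
  have hderiv : ∀ᵐ t, t ∈ uIoc a b → fderiv ℝ v (γ t) (1, φ t) = deriv (v ∘ γ) t := by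
    filter_upwards [hφ.ae_hasDerivAt_integral] with t ht htmem
    have hγt : HasDerivAt γ (1, φ t) t := (hasDerivAt_id t).prodMk <|
      (ht (uIoc_subset_uIcc htmem) a left_mem_uIcc).const_add x₀
    exact ((hv.differentiable one_ne_zero (γ t)).hasFDerivAt.comp_hasDerivAt t hγt).deriv.symm
  calc ∫ t in a..b, fderiv ℝ v (γ t) (1, φ t)
      = ∫ t in a..b, deriv (v ∘ γ) t := intervalIntegral.integral_congr_ae hderiv
    _ = v (γ b) - v (γ a) :=
        (hC.comp hγ (mapsTo_image _ _)).absolutelyContinuousOnInterval.integral_deriv_eq_sub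
    _ = v (γ b) - v (a, x₀) := by simp [γ]

section OccupationMeasure
variable {E W : Type*} [MeasurableSpace E] [MeasurableSpace W]

/-- The occupation measure on `[0, T] × E × W` of a state path `x` and a control `u`: the time
spent by `(t, x t, u t)` in a given set. -/
def occupationMeasure (T : ℝ) (x : ℝ → E) (u : ℝ → W) : Measure (ℝ × E × W) :=
  (volume.restrict (Icc 0 T)).map fun t => (t, x t, u t)

instance (T : ℝ) (x : ℝ → E) (u : ℝ → W) : IsFiniteMeasure (occupationMeasure T x u) := by
  unfold occupationMeasure
  infer_instance

variable {T : ℝ} {x : ℝ → E} {u : ℝ → W}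
  (hxu : AEMeasurable (fun t => (t, x t, u t)) (volume.restrict (Icc 0 T)))
  {K : Set (ℝ × E × W)} (hmem : ∀ t ∈ Icc 0 T, (t, x t, u t) ∈ K)

include hxu hmem

lemma occupationMeasure_compl (hK : MeasurableSet K) : occupationMeasure T x u Kᶜ = 0 := by
  rw [← mem_ae_iff]
  exact (ae_map_iff hxu hK).2 (ae_restrict_of_forall_mem measurableSet_Icc hmem)

lemma integral_occupationMeasure [TopologicalSpace E] [SecondCountableTopology E] [BorelSpace E]
    [T2Space E] [TopologicalSpace W] [SecondCountableTopology W] [BorelSpace W] [T2Space W]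
    (hK : IsCompact K)
    {F : ℝ × E × W → ℝ} (hF : ContinuousOn F K) :
    ∫ z, F z ∂occupationMeasure T x u = ∫ t in Icc 0 T, F (t, x t, u t) :=
  integral_map hxu <| Integrable.aestronglyMeasurable <| integrable_comp_of_continuousOn hK hF
    aemeasurable_id (occupationMeasure_compl hxu hmem hK.measurableSet)

end OccupationMeasure

section InputAffine
variable {n m : ℕ} {f : ℝ × (Fin n → ℝ) → Fin n → ℝ} {g : ℝ × (Fin n → ℝ) → Fin n → Fin m → ℝ}

lemma isCompact_Ubox : IsCompact (Ubox m) :=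
  isCompact_Icc

lemma continuousOn_Fvec {I : Set ℝ} {X : Set (Fin n → ℝ)} {U : Set (Fin m → ℝ)}
    (hf : ContinuousOn f (I ×ˢ X)) (hg : ContinuousOn g (I ×ˢ X)) :
    ContinuousOn (Fvec f g) (I ×ˢ X ×ˢ U) := by
  have hproj : ContinuousOn (fun z : ℝ × (Fin n → ℝ) × (Fin m → ℝ) => (z.1, z.2.1))
      (I ×ˢ X ×ˢ U) := by fun_prop
  have hmaps : MapsTo (fun z : ℝ × (Fin n → ℝ) × (Fin m → ℝ) => (z.1, z.2.1))
      (I ×ˢ X ×ˢ U) (I ×ˢ X) := fun z hz => ⟨hz.1, hz.2.1⟩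
  have hf' := continuousOn_pi.1 (hf.comp hproj hmaps)
  have hg' := fun k => continuousOn_pi.1 (continuousOn_pi.1 (hg.comp hproj hmaps) k)
  exact continuousOn_pi.2 fun k =>
    (hf' k).add (continuousOn_finsetSum _ fun j _ => (hg' k j).mul (by fun_prop))

lemma LFop_eq_fderiv_apply (v : ℝ × (Fin n → ℝ) → ℝ) (z : ℝ × (Fin n → ℝ) × (Fin m → ℝ)) :
    LFop f g v z = fderiv ℝ v (z.1, z.2.1) (1, Fvec f g z) := by
  have hsplit : ((1 : ℝ), Fvec f g z) =
      (1, 0) + ∑ k, Fvec f g z k • ((0 : ℝ), (Pi.single k 1 : Fin n → ℝ)) := by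
    ext i
    · simp [Prod.fst_sum]
    · simp [Prod.snd_sum, Finset.sum_apply, Pi.single_apply]
  simp only [hsplit, map_add, map_sum, map_smul, smul_eq_mul, LFop, mul_comm]

lemma continuousOn_LFop {I : Set ℝ} {X : Set (Fin n → ℝ)} {U : Set (Fin m → ℝ)}
    (hf : ContinuousOn f (I ×ˢ X)) (hg : ContinuousOn g (I ×ˢ X))
    {v : ℝ × (Fin n → ℝ) → ℝ} (hv : ContDiff ℝ 1 v) :
    ContinuousOn (LFop f g v) (I ×ˢ X ×ˢ U) := by
  simp only [funext (LFop_eq_fderiv_apply (f := f) (g := g) v)]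
  have hfderiv : Continuous fun z : ℝ × (Fin n → ℝ) × (Fin m → ℝ) => fderiv ℝ v (z.1, z.2.1) :=
    (hv.continuous_fderiv one_ne_zero).comp (by fun_prop)
  exact hfderiv.continuousOn.clm_apply (continuousOn_const.prodMk (continuousOn_Fvec hf hg))

variable {T : ℝ} {X XT : Set (Fin n → ℝ)} {x₀ : Fin n → ℝ}
  {h : ℝ × (Fin n → ℝ) × (Fin m → ℝ) → ℝ} {H : (Fin n → ℝ) → ℝ}

namespace SatisfiesLiouville
variable {η : Measure (ℝ × (Fin n → ℝ) × (Fin m → ℝ))} {ηT : Measure (Fin n → ℝ)}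
  (hL : SatisfiesLiouville T x₀ f g η ηT)
include hL

lemma measureReal_terminal_univ : ηT.real univ = 1 := by
  simpa [LFop_eq_fderiv_apply] using (hL (fun _ => 1) contDiff_const).symm

lemma measureReal_univ : η.real univ = T := by
  simpa [LFop_eq_fderiv_apply, fderiv_fst, hL.measureReal_terminal_univ]
    using hL (fun z => z.1) contDiff_fst

end SatisfiesLiouville

lemma QFeasible.nonempty (hT : 0 < T) {η : Measure (ℝ × (Fin n → ℝ) × (Fin m → ℝ))}
    {ηT : Measure (Fin n → ℝ)} (hQ : QFeasible T X XT x₀ f g η ηT) :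
    (Icc 0 T ×ˢ X ×ˢ Ubox m).Nonempty ∧ XT.Nonempty := by
  obtain ⟨_, _, hη, hηT, hL⟩ := hQ
  have : NeZero η := ⟨fun hzero => hT.ne (by simpa [hzero] using hL.measureReal_univ)⟩
  have : NeZero ηT := ⟨fun hzero => by simpa [hzero] using hL.measureReal_terminal_univ⟩
  exact ⟨nonempty_of_mem (mem_ae_iff.2 hη), nonempty_of_mem (mem_ae_iff.2 hηT)⟩

namespace IsAdmissiblePair
variable {x : ℝ → Fin n → ℝ} {u : ℝ → Fin m → ℝ} (hxu : IsAdmissiblePair T X XT x₀ f g x u)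
include hxu

lemma mem (t : ℝ) (ht : t ∈ Icc 0 T) : (t, x t, u t) ∈ Icc 0 T ×ˢ X ×ˢ Ubox m :=
  have ⟨_, hU, _, _, hX, _⟩ := hxu
  ⟨ht, hX t ht, hU t ht⟩

lemma eq_add_integral {t : ℝ} (ht : t ∈ Icc 0 T) :
    x t = x₀ + ∫ s in 0..t, Fvec f g (s, x s, u s) := by
  obtain ⟨-, -, -, -, -, -, htraj⟩ := hxu
  rw [htraj t ht, intervalIntegral.integral_of_le ht.1, integral_Icc_eq_integral_Ioc]

lemma aemeasurable :
    AEMeasurable (fun t => (t, x t, u t)) (volume.restrict (Icc 0 T)) := by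
  obtain ⟨hu, -, -, -, -, hint, htraj⟩ := hxu
  have hx : ContinuousOn x (Icc 0 T) :=
    (continuousOn_const.add (intervalIntegral.continuousOn_primitive_Icc hint)).congr htraj
  exact aemeasurable_id.prodMk ((hx.aemeasurable measurableSet_Icc).prodMk hu.aemeasurable)

theorem qFeasible_occupationMeasure (hT : 0 ≤ T) (hX : IsCompact X) (hXT : MeasurableSet XT)
    (hf : ContinuousOn f (Icc 0 T ×ˢ X)) (hg : ContinuousOn g (Icc 0 T ×ˢ X)) :
    QFeasible T X XT x₀ f g (occupationMeasure T x u) (Measure.dirac (x T)) := by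
  have ⟨_, _, _, hend, _, hint, _⟩ := hxu
  have hK : IsCompact (Icc 0 T ×ˢ X ×ˢ Ubox m) := isCompact_Icc.prod (hX.prod isCompact_Ubox)
  refine ⟨inferInstance, inferInstance,
    occupationMeasure_compl hxu.aemeasurable hxu.mem hK.measurableSet, ?_, fun v hv => ?_⟩
  · simpa [Measure.dirac_apply' _ hXT.compl] using hend
  obtain ⟨M, hM⟩ := hK.exists_bound_of_continuousOn (continuousOn_Fvec hf hg)
  have hftc : ∫ t in 0..T, LFop f g v (t, x t, u t) = v (T, x T) - v (0, x₀) := by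
    rw [hxu.eq_add_integral ⟨hT, le_rfl⟩, ← integral_fderiv_comp_primitive hv
      ((intervalIntegrable_iff_integrableOn_Icc_of_le hT).2 hint)
      (fun t ht => hM _ (hxu.mem t (uIcc_of_le hT ▸ ht))) x₀]
    refine intervalIntegral.integral_congr fun t ht => ?_
    simp only [LFop_eq_fderiv_apply]
    rw [← hxu.eq_add_integral (uIcc_of_le hT ▸ ht)]
  rw [integral_occupationMeasure hxu.aemeasurable hxu.mem hK (continuousOn_LFop hf hg hv),
    integral_Icc_eq_integral_Ioc, ← intervalIntegral.integral_of_le hT, hftc, integral_dirac,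
    add_sub_cancel]

theorem Qcost_occupationMeasure (hX : IsCompact X)
    (hh : ContinuousOn h (Icc 0 T ×ˢ X ×ˢ Ubox m)) :
    Qcost h H (occupationMeasure T x u) (Measure.dirac (x T)) = Jcost T h H x u := by
  rw [Qcost, Jcost, integral_dirac, integral_occupationMeasure hxu.aemeasurable hxu.mem
    (isCompact_Icc.prod (hX.prod isCompact_Ubox)) hh]

end IsAdmissiblePair

theorem JVals_subset_QVals (hT : 0 ≤ T) (hX : IsCompact X) (hXT : MeasurableSet XT)
    (hf : ContinuousOn f (Icc 0 T ×ˢ X)) (hg : ContinuousOn g (Icc 0 T ×ˢ X))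
    (hh : ContinuousOn h (Icc 0 T ×ˢ X ×ˢ Ubox m)) :
    JVals T X XT x₀ f g h H ⊆ QVals T X XT x₀ f g h H := by
  rintro _ ⟨x, u, hxu, rfl⟩
  exact ⟨_, _, hxu.qFeasible_occupationMeasure hT hX hXT hf hg,
    (hxu.Qcost_occupationMeasure hX hh).symm⟩

section WeakDuality
variable (hX : IsCompact X) (hXT : IsCompact XT) (hf : ContinuousOn f (Icc 0 T ×ˢ X))
  (hg : ContinuousOn g (Icc 0 T ×ˢ X)) (hh : ContinuousOn h (Icc 0 T ×ˢ X ×ˢ Ubox m))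
  (hH : ContinuousOn H XT)
include hX hXT hf hg hh hH

theorem QFeasible.le_Qcost_add {η : Measure (ℝ × (Fin n → ℝ) × (Fin m → ℝ))}
    {ηT : Measure (Fin n → ℝ)} (hQ : QFeasible T X XT x₀ f g η ηT)
    {v : ℝ × (Fin n → ℝ) → ℝ} (hv : ContDiff ℝ 1 v) {ε : ℝ}
    (hrunning : ∀ z ∈ Icc 0 T ×ˢ X ×ˢ Ubox m, -ε ≤ LFop f g v z + h z)
    (hterminal : ∀ y ∈ XT, v (T, y) ≤ H y + ε) :
    v (0, x₀) ≤ Qcost h H η ηT + ε * (T + 1) := by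
  obtain ⟨_, _, hη, hηT, hL⟩ := hQ
  have integrable {F : ℝ × (Fin n → ℝ) × (Fin m → ℝ) → ℝ}
      (hF : ContinuousOn F (Icc 0 T ×ˢ X ×ˢ Ubox m)) : Integrable F η :=
    integrable_comp_of_continuousOn (isCompact_Icc.prod (hX.prod isCompact_Ubox)) hF
      aemeasurable_id hη
  have integrable_terminal {F : (Fin n → ℝ) → ℝ} (hF : ContinuousOn F XT) : Integrable F ηT :=
    integrable_comp_of_continuousOn hXT hF aemeasurable_id hηT
  have hvT : ContinuousOn (fun y => v (T, y)) XT :=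
    (hv.continuous.comp (by fun_prop)).continuousOn
  have hle : ∫ _, -ε ∂η ≤ ∫ z, (LFop f g v z + h z) ∂η :=
    integral_mono_ae (integrable_const _) (integrable ((continuousOn_LFop hf hg hv).add hh))
      (mem_of_superset hη hrunning)
  have hleT : ∫ y, v (T, y) ∂ηT ≤ ∫ y, (H y + ε) ∂ηT :=
    integral_mono_ae (integrable_terminal hvT)
      ((integrable_terminal hH).add (integrable_const _)) (mem_of_superset hηT hterminal)
  rw [integral_add (integrable (continuousOn_LFop hf hg hv)) (integrable hh), integral_const,
    hL.measureReal_univ, smul_eq_mul] at hle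
  rw [integral_add (integrable_terminal hH) (integrable_const _), integral_const,
    hL.measureReal_terminal_univ, smul_eq_mul] at hleT
  rw [Qcost]
  linarith [hL v hv]

end WeakDuality

lemma exists_affineMap_eq_Fvec (z : ℝ × (Fin n → ℝ)) :
    ∃ A : (Fin m → ℝ) →ᵃ[ℝ] (Fin n → ℝ), ∀ u, Fvec f g (z.1, z.2, u) = A u :=
  ⟨AffineMap.const ℝ _ (f z) + (Matrix.mulVecLin (Matrix.of (g z))).toAffineMap, fun _ => rfl⟩

section BoxControl
variable (hT : 0 < T) (hX : IsCompact X) (hXT : IsCompact XT)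
  (hf : ContinuousOn f (Icc 0 T ×ˢ X)) (hg : ContinuousOn g (Icc 0 T ×ˢ X))
  (hh : ContinuousOn h (Icc 0 T ×ˢ X ×ˢ Ubox m)) (hH : ContinuousOn H XT)
  (hconv : ∀ t ∈ Icc 0 T, ∀ x ∈ X, ConvexOn ℝ (Ubox m) fun u => h (t, x, u))

/-- The optimal control problem with dynamics `f + g u` and controls in the unit box, as a
`ConvexControlProblem`. -/
def boxControlProblem : ConvexControlProblem (Fin n → ℝ) (Fin m → ℝ) where
  horizon := T
  state := X
  target := XT
  control := Ubox m
  field := Fvec f g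
  running := h
  terminal := H
  horizon_pos := hT
  isCompact_state := hX
  isCompact_target := hXT
  isCompact_control := isCompact_Ubox
  continuousOn_field := continuousOn_Fvec hf hg
  continuousOn_running := hh
  continuousOn_terminal := hH
  affine_field t _ x _ := (exists_affineMap_eq_Fvec (t, x)).imp fun _ hA u _ => hA u
  convexOn_running := hconv

variable {hT hX hXT hf hg hh hH hconv} in
theorem QFeasible.value_penalized_le
    [Nonempty (boxControlProblem hT hX hXT hf hg hh hH hconv).target]
    [Nonempty (boxControlProblem hT hX hXT hf hg hh hH hconv).domain]
    {η : Measure (ℝ × (Fin n → ℝ) × (Fin m → ℝ))} {ηT : Measure (Fin n → ℝ)}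
    (hQ : QFeasible T X XT x₀ f g η ηT) (k : ℝ≥0) :
    ((boxControlProblem hT hX hXT hf hg hh hH hconv).penalized k).value (0, x₀) ≤
      Qcost h H η ηT := by
  set P := boxControlProblem hT hX hXT hf hg hh hH hconv
  refine le_of_forall_pos_le_add fun δ hδ => ?_
  obtain ⟨ε, hε, hεδ⟩ := exists_pos_mul_lt hδ (T + 2)
  obtain ⟨v, hv, hsub, happrox⟩ := (P.penalized k).exists_contDiff_subsolution
    (S := {(0, x₀)} ∪ {T} ×ˢ XT) (isCompact_singleton.union (isCompact_singleton.prod hXT)) hε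
  have hrunning (z) (hz : z ∈ Icc 0 T ×ˢ X ×ˢ Ubox m) : -ε ≤ LFop f g v z + h z := by
    have := hsub ⟨z, hz⟩ (z.1, z.2.1) hz.1.2
    simpa [ConvexControlProblem.penalized, P, boxControlProblem, LFop_eq_fderiv_apply] using this
  have hterminal (y) (hy : y ∈ XT) : v (T, y) ≤ H y + ε := by
    have happrox := (abs_le.1 (happrox (T, y) (.inr ⟨rfl, hy⟩))).2
    have hvalue : (P.penalized k).value (T, y) = (P.penalized k).terminal y :=
      (P.penalized k).value_horizon y
    have : (P.penalized k).terminal y ≤ H y := P.penalized_terminal_le k hy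
    linarith
  have := hQ.le_Qcost_add hX hXT hf hg hh hH hv hrunning hterminal
  linarith [(abs_le.1 (happrox (0, x₀) (.inl rfl))).1]

theorem exists_isAdmissiblePair_Jcost_le
    [Nonempty (boxControlProblem hT hX hXT hf hg hh hH hconv).target]
    [Nonempty (boxControlProblem hT hX hXT hf hg hh hH hconv).domain] {c : ℝ}
    (hc : ∀ k : ℕ,
      ((boxControlProblem hT hX hXT hf hg hh hH hconv).penalized k).value (0, x₀) ≤ c) :
    ∃ x u, IsAdmissiblePair T X XT x₀ f g x u ∧ Jcost T h H x u ≤ c := by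
  obtain ⟨x, u, hx, hu, hU, hmem, hend, htraj, hcost⟩ :=
    ConvexControlProblem.exists_trajectory_le_of_value_penalized_le hc
  have hint : IntegrableOn (fun s => Fvec f g (s, x s, u s)) (Icc 0 T) :=
    integrable_comp_of_continuousOn (isCompact_Icc.prod (hX.prod isCompact_Ubox))
      (continuousOn_Fvec hf hg) (by fun_prop)
      (ae_restrict_of_forall_mem measurableSet_Icc fun t ht => ⟨ht, hmem t ht, hU t⟩)
  refine ⟨x, u, ⟨hu, fun t _ => hU t, ?_, hend, hmem, hint, fun t ht => ?_⟩, ?_⟩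
  · simpa using htraj 0 ⟨le_rfl, hT.le⟩
  · rw [integral_Icc_eq_integral_Ioc, ← intervalIntegral.integral_of_le ht.1]
    exact htraj t ht
  · rw [Jcost, integral_Icc_eq_integral_Ioc, ← intervalIntegral.integral_of_le hT.le]
    exact hcost

end BoxControl

end InputAffine

theorem Q_value_eq_OCP_value_general
    {n m : ℕ} {T : ℝ} (hT : 0 < T) {X XT : Set (Fin n → ℝ)} (hX : IsCompact X)
    (hXT : IsCompact XT) {x₀ : Fin n → ℝ}
    {f : ℝ × (Fin n → ℝ) → Fin n → ℝ} {g : ℝ × (Fin n → ℝ) → Fin n → Fin m → ℝ}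
    (hf : ContinuousOn f (Icc 0 T ×ˢ X)) (hg : ContinuousOn g (Icc 0 T ×ˢ X))
    {h : ℝ × (Fin n → ℝ) × (Fin m → ℝ) → ℝ} {H : (Fin n → ℝ) → ℝ}
    (hh : ContinuousOn h (Icc 0 T ×ˢ X ×ˢ Ubox m)) (hH : ContinuousOn H XT)
    (hconv : ∀ t ∈ Icc 0 T, ∀ x ∈ X, ConvexOn ℝ (Ubox m) fun u => h (t, x, u))
    (hQfeas : ∃ (η : Measure (ℝ × (Fin n → ℝ) × (Fin m → ℝ))) (ηT : Measure (Fin n → ℝ)),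
      QFeasible T X XT x₀ f g η ηT) :
    ∃ x u, IsAdmissiblePair T X XT x₀ f g x u ∧
      IsLeast (JVals T X XT x₀ f g h H) (Jcost T h H x u) ∧
      IsLeast (QVals T X XT x₀ f g h H) (Jcost T h H x u) := by
  obtain ⟨η, ηT, hQ⟩ := hQfeas
  set P := boxControlProblem hT hX hXT hf hg hh hH hconv
  have : Nonempty P.domain := (hQ.nonempty hT).1.to_subtype
  have : Nonempty P.target := (hQ.nonempty hT).2.to_subtype
  have hlower (k : NNReal) : (P.penalized k).value (0, x₀) ∈
      lowerBounds (QVals T X XT x₀ f g h H) := by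
    rintro _ ⟨η', ηT', hQ', rfl⟩
    exact hQ'.value_penalized_le k
  obtain ⟨x, u, hxu, hle⟩ := exists_isAdmissiblePair_Jcost_le hT hX hXT hf hg hh hH hconv
    (c := sInf (QVals T X XT x₀ f g h H)) fun k => le_csInf ⟨_, η, ηT, hQ, rfl⟩ (hlower k)
  have hmem : Jcost T h H x u ∈ JVals T X XT x₀ f g h H := ⟨x, u, hxu, rfl⟩
  have hsub : JVals T X XT x₀ f g h H ⊆ QVals T X XT x₀ f g h H :=
    JVals_subset_QVals hT.le hX hXT.measurableSet hf hg hh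
  have hleast : Jcost T h H x u ∈ lowerBounds (QVals T X XT x₀ f g h H) := fun c hc =>
    hle.trans (csInf_le ⟨_, hlower 0⟩ hc)
  exact ⟨x, u, hxu, ⟨hmem, fun c hc => hleast (hsub hc)⟩, hsub hmem, hleast⟩

end

/-- under convexity of h(t,x,·) and existence of an a.e.-unique optimal
admissible pair, if (Q) is feasible then its minimum q* equals the optimal value of the
optimal control problem: q* = J* = J(x*,u*). -/
theorem Q_value_eq_OCP_value
    {n m : ℕ} (hn : 0 < n) (hm : 0 < m) (T : ℝ) (hT : 0 < T)
    (X XT : Set (Fin n → ℝ)) (hX : IsCompact X) (hXT : IsCompact XT) (hXTsub : XT ⊆ X)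
    (x₀ : Fin n → ℝ) (hx₀ : x₀ ∈ X)
    (f : ℝ × (Fin n → ℝ) → Fin n → ℝ) (g : ℝ × (Fin n → ℝ) → Fin n → Fin m → ℝ)
    (hf : ContinuousOn f (Set.Icc (0 : ℝ) T ×ˢ Set.univ))
    (hg : ContinuousOn g (Set.Icc (0 : ℝ) T ×ˢ Set.univ))
    (h : ℝ × (Fin n → ℝ) × (Fin m → ℝ) → ℝ) (H : (Fin n → ℝ) → ℝ)
    (hh : Continuous h) (hH : Continuous H)
    (xs : ℝ → Fin n → ℝ) (us : ℝ → Fin m → ℝ)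
    (hconv : ∀ (t : ℝ) (x : Fin n → ℝ),
      ConvexOn ℝ Set.univ (fun u : Fin m → ℝ => h (t, x, u)))
    (hopt : IsAdmissiblePair T X XT x₀ f g xs us)
    (hleast : IsLeast (JVals T X XT x₀ f g h H) (Jcost T h H xs us))
    (huniq : ∀ (x : ℝ → Fin n → ℝ) (u : ℝ → Fin m → ℝ),
      IsAdmissiblePair T X XT x₀ f g x u → Jcost T h H x u = Jcost T h H xs us →
      ∀ᵐ t ∂(volume.restrict (Set.Icc (0 : ℝ) T)), x t = xs t ∧ u t = us t)
    (hQfeas : ∃ (η : Measure (ℝ × (Fin n → ℝ) × (Fin m → ℝ))) (ηT : Measure (Fin n → ℝ)),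
      QFeasible T X XT x₀ f g η ηT) :
    sInf (QVals T X XT x₀ f g h H) = sInf (JVals T X XT x₀ f g h H) ∧
      sInf (JVals T X XT x₀ f g h H) = Jcost T h H xs us := by
  obtain ⟨x, u, -, hJ, hQ⟩ := Q_value_eq_OCP_value_general hT hX hXT
    (hf.mono (prod_mono_right (subset_univ X))) (hg.mono (prod_mono_right (subset_univ X)))
    hh.continuousOn hH.continuousOn
    (fun t _ x _ => (hconv t x).subset (subset_univ _) (convex_Icc _ _)) hQfeas
  exact ⟨hQ.csInf_eq.trans hJ.csInf_eq.symm, hleast.csInf_eq⟩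

end
end
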